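/- Let E = E(2,M,p) be a planar fractal percolation with M^{-1} < p < 1. Then, conditioned on E ≠ ∅, almost surely the following holds: for every continuously differentiable real-valued function f defined on an open neighborhood of [0,1]² whose two partial derivatives are strictly positive at every point, the image f(E) contains a nonempty open interval. -/

import Mathlib

open MeasureTheory Set ENNReal ProbabilityTheory Real

noncomputable section

/-- The alphabet indexing the `M^d` subcubes of a cube in `[0,1]^d`. -/
abbrev Alpha (d M : ℕ) : Type := Fin d → Fin M

/-- Finite nonempty words over the alphabet; they index `M`-adic cubes. -/
abbrev Word (d M : ℕ) : Type := {w : List (Alpha d M) // w ≠ []}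

/-- The sample space: `{0,1}`-labelings of all finite nonempty words. -/
abbrev PercSpace (d M : ℕ) : Type := Word d M → Bool

/-- `P` is the product measure making the labels i.i.d. Bernoulli(`p`). -/
def IsBernoulliPerc (d M : ℕ) (p : ℝ) (P : Measure (PercSpace d M)) : Prop :=
  IsProbabilityMeasure P ∧
    ∀ (S : Finset (Word d M)) (b : Word d M → Bool),
      P {ω | ∀ w ∈ S, ω w = b w} =
        ∏ w ∈ S, if b w then ENNReal.ofReal p else ENNReal.ofReal (1 - p)

/-- A level-`w.length` cube is retained iff its word and every nonempty prefix
of its word carry label 1. -/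
def Retained (d M : ℕ) (ω : PercSpace d M) (w : List (Alpha d M)) : Prop :=
  ∀ (u : List (Alpha d M)) (hu : u ≠ []), u <+: w → ω ⟨u, hu⟩ = true

/-- The `i`-th coordinate of the lower-left corner of the cube indexed by `w`. -/
def wordBase (d M : ℕ) (w : List (Alpha d M)) (i : Fin d) : ℝ :=
  ∑ j : Fin w.length, ((w.get j) i : ℝ) * (M : ℝ) ^ (-(j : ℤ) - 1)

/-- The closed `M`-adic cube of level `w.length` indexed by the word `w`. -/
def wordCube (d M : ℕ) (w : List (Alpha d M)) : Set (EuclideanSpace ℝ (Fin d)) :=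
  {x | ∀ i, wordBase d M w i ≤ x i ∧ x i ≤ wordBase d M w i + (M : ℝ) ^ (-(w.length : ℤ))}

/-- `E_n`, the union of the retained level-`n` cubes. -/
def approx (d M : ℕ) (ω : PercSpace d M) (n : ℕ) : Set (EuclideanSpace ℝ (Fin d)) :=
  ⋃ w ∈ {w : List (Alpha d M) | w.length = n ∧ Retained d M ω w}, wordCube d M w

/-- The fractal percolation set `E = ⋂_{n ≥ 1} E_n`. -/
def percLimit (d M : ℕ) (ω : PercSpace d M) : Set (EuclideanSpace ℝ (Fin d)) :=
  ⋂ n ∈ {n : ℕ | 1 ≤ n}, approx d M ω n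

/-! ## Auxiliary material -/

/-- Words of length exactly `m`. -/
abbrev FW (M m : ℕ) : Type := {l : List (Alpha 2 M) // l.length = m}

instance fwFintype (M m : ℕ) : Fintype (FW M m) :=
  inferInstanceAs (Fintype (List.Vector (Alpha 2 M) m))

/-- The labeling seen from the cube `w`. -/
def sh {M : ℕ} (w : List (Alpha 2 M)) (ω : PercSpace 2 M) : PercSpace 2 M :=
  fun u => ω ⟨w ++ u.1, by simp [u.2]⟩

/-- Affine renormalisation of the line with parameters `(s, a)` in the cube `w`. -/
def ap {M : ℕ} (s a : ℝ) (w : List (Alpha 2 M)) : ℝ :=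
  (M : ℝ) ^ w.length * (a - wordBase 2 M w 1 - s * wordBase 2 M w 0)

lemma retained_nil {M : ℕ} (ω : PercSpace 2 M) : Retained 2 M ω [] := by
  intro u hu h
  exact absurd (List.prefix_nil.1 h) hu

lemma retained_append {M : ℕ} (ω : PercSpace 2 M) (w u : List (Alpha 2 M)) :
    Retained 2 M ω (w ++ u) ↔ Retained 2 M ω w ∧ Retained 2 M (sh w ω) u := by
  constructor
  · intro h
    refine ⟨fun v hv hp => h v hv (hp.trans (List.prefix_append _ _)), fun v hv hp => ?_⟩
    exact h (w ++ v) (by simp [hv]) ((List.prefix_append_right_inj w).2 hp)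
  · rintro ⟨h1, h2⟩ v hv hp
    rcases List.prefix_or_prefix_of_prefix hp (List.prefix_append w u) with h | h
    · exact h1 v hv h
    · obtain ⟨t, rfl⟩ := h
      by_cases ht : t = []
      · subst ht
        exact h1 _ hv (by simp)
      · exact h2 t ht ((List.prefix_append_right_inj w).1 hp)

lemma sh_append {M : ℕ} (ω : PercSpace 2 M) (w u : List (Alpha 2 M)) :
    sh (w ++ u) ω = sh u (sh w ω) := by
  funext v
  simp [sh, List.append_assoc]

lemma sh_nil {M : ℕ} (ω : PercSpace 2 M) : sh [] ω = ω := by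
  funext v
  simp [sh]

lemma measurable_sh {M : ℕ} (w : List (Alpha 2 M)) : Measurable (sh (M := M) w) :=
  measurable_pi_lambda _ fun _ => measurable_pi_apply _

lemma measurableSet_retained {M : ℕ} (w : List (Alpha 2 M)) :
    MeasurableSet {ω : PercSpace 2 M | Retained 2 M ω w} := by
  have : {ω : PercSpace 2 M | Retained 2 M ω w} =
      ⋂ (u : List (Alpha 2 M)) (hu : u ≠ []) (_ : u <+: w), {ω | ω ⟨u, hu⟩ = true} := by
    ext ω
    simp [Retained]
  rw [this]
  refine MeasurableSet.iInter fun u => MeasurableSet.iInter fun hu => MeasurableSet.iInter fun _ => ?_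
  exact (measurable_pi_apply (X := fun _ : Word 2 M => Bool) ⟨u, hu⟩) (measurableSet_singleton true)

/-! ### Uniqueness of the Bernoulli measure and the branching decomposition -/

lemma bern_unique {M : ℕ} {p : ℝ} {P Q : Measure (PercSpace 2 M)}
    (hP : IsBernoulliPerc 2 M p P) (hQ : IsBernoulliPerc 2 M p Q) : P = Q := by
  classical
  haveI := hP.1
  haveI := hQ.1
  let 𝒞 : Set (Set (PercSpace 2 M)) :=
    {T | ∃ (S : Finset (Word 2 M)) (b : Word 2 M → Bool), T = {ω | ∀ w ∈ S, ω w = b w}}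
  refine MeasureTheory.ext_of_generate_finite 𝒞 ?_ ?_ ?_ (by simp)
  · apply le_antisymm
    · refine iSup_le fun w => ?_
      rw [MeasurableSpace.comap_le_iff_le_map]
      intro t _
      have hb : ∀ c : Bool, MeasurableSet[MeasurableSpace.generateFrom 𝒞]
          ((fun ω : PercSpace 2 M => ω w) ⁻¹' {c}) := by
        intro c
        apply MeasurableSpace.measurableSet_generateFrom
        exact ⟨{w}, fun _ => c, by ext; simp⟩
      change MeasurableSet[MeasurableSpace.generateFrom 𝒞] ((fun ω : PercSpace 2 M => ω w) ⁻¹' t)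
      have : t = ⋃ c ∈ t, {c} := by simp
      rw [this, Set.preimage_iUnion₂]
      exact MeasurableSet.biUnion (Set.to_countable t) fun c _ => hb c
    · apply MeasurableSpace.generateFrom_le
      rintro T ⟨S, b, rfl⟩
      have : {ω : PercSpace 2 M | ∀ w ∈ S, ω w = b w} = ⋂ w ∈ S, (fun ω => ω w) ⁻¹' {b w} := by
        ext; simp
      rw [this]
      exact Finset.measurableSet_biInter S fun w _ =>
        measurable_pi_apply (X := fun _ : Word 2 M => Bool) w (measurableSet_singleton _)
  · rintro _ ⟨S, b, rfl⟩ _ ⟨S', b', rfl⟩ ⟨ω0, h0, h0'⟩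
    refine ⟨S ∪ S', ω0, ?_⟩
    ext ω
    simp only [mem_inter_iff, mem_setOf_eq, Finset.mem_union] at h0 h0' ⊢
    constructor
    · rintro ⟨h, h'⟩ w (hw | hw)
      · rw [h w hw, h0 w hw]
      · rw [h' w hw, h0' w hw]
    · intro h
      exact ⟨fun w hw => by rw [h w (Or.inl hw), h0 w hw],
        fun w hw => by rw [h w (Or.inr hw), h0' w hw]⟩
  · rintro _ ⟨S, b, rfl⟩
    rw [hP.2, hQ.2]

/-- Glue the labels of length at most `m` with independent labelings below. -/
def glue {M : ℕ} (m : ℕ) (x : PercSpace 2 M × (FW M m → PercSpace 2 M)) : PercSpace 2 M :=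
  fun w => if h : w.1.length ≤ m then x.1 w else
    x.2 ⟨w.1.take m, by simp; omega⟩ ⟨w.1.drop m, by simp; omega⟩

lemma glue_of_le {M m : ℕ} (x : PercSpace 2 M × (FW M m → PercSpace 2 M)) (w : Word 2 M)
    (h : w.1.length ≤ m) : glue m x w = x.1 w := by
  simp [glue, h]

lemma sh_glue {M m : ℕ} (x : PercSpace 2 M × (FW M m → PercSpace 2 M)) (v : FW M m) :
    sh v.1 (glue m x) = x.2 v := by
  funext u
  obtain ⟨v, rfl⟩ := v
  have hu : 0 < u.1.length := List.length_pos_iff.2 u.2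
  have : ¬ (v ++ u.1).length ≤ v.length := by simp; exact u.2
  simp [sh, glue, this, u.2]

lemma retained_glue {M m : ℕ} (x : PercSpace 2 M × (FW M m → PercSpace 2 M))
    (w : List (Alpha 2 M)) (h : w.length ≤ m) :
    Retained 2 M (glue m x) w ↔ Retained 2 M x.1 w := by
  have : ∀ (u : List (Alpha 2 M)) (hu : u ≠ []), u <+: w → glue m x ⟨u, hu⟩ = x.1 ⟨u, hu⟩ :=
    fun u hu hp => glue_of_le x ⟨u, hu⟩ (hp.length_le.trans h)
  constructor
  · intro H u hu hp
    rw [← this u hu hp]; exact H u hu hp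
  · intro H u hu hp
    rw [this u hu hp]; exact H u hu hp

lemma measurable_glue {M m : ℕ} : Measurable (glue (M := M) m) := by
  refine measurable_pi_lambda _ fun w => ?_
  by_cases h : w.1.length ≤ m
  · simp only [glue, h, dite_true]
    exact (measurable_pi_apply w).comp measurable_fst
  · simp only [glue, h, dite_false]
    exact (measurable_pi_apply _).comp ((measurable_pi_apply _).comp measurable_snd)

lemma glue_bern {M : ℕ} {p : ℝ} {P : Measure (PercSpace 2 M)} [SFinite P]
    (hP : IsBernoulliPerc 2 M p P) (m : ℕ) :
    Measure.map (glue m) (P.prod (Measure.pi fun _ : FW M m => P)) = P := by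
  classical
  haveI := hP.1
  refine bern_unique (p := p) ⟨Measure.isProbabilityMeasure_map measurable_glue.aemeasurable, ?_⟩ hP
  intro S b
  have hms : MeasurableSet {ω : PercSpace 2 M | ∀ w ∈ S, ω w = b w} := by
    have : {ω : PercSpace 2 M | ∀ w ∈ S, ω w = b w} = ⋂ w ∈ S, (fun ω => ω w) ⁻¹' {b w} := by
      ext; simp
    rw [this]
    exact Finset.measurableSet_biInter S fun w _ =>
      measurable_pi_apply (X := fun _ : Word 2 M => Bool) w (measurableSet_singleton _)
  rw [Measure.map_apply measurable_glue hms]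
  let S0 := S.filter (fun w => w.1.length ≤ m)
  let S1 := S.filter (fun w => ¬ w.1.length ≤ m)
  let e : FW M m → Word 2 M → Word 2 M := fun v u => ⟨v.1 ++ u.1, by simp [u.2]⟩
  have he : ∀ v, Function.Injective (e v) := by
    intro v u u' h
    have := congrArg Subtype.val h
    exact Subtype.ext (List.append_cancel_left this)
  let T : FW M m → Finset (Word 2 M) := fun v => S.preimage (e v) ((he v).injOn)
  have hpre : glue m ⁻¹' {ω : PercSpace 2 M | ∀ w ∈ S, ω w = b w} =
      {ω | ∀ w ∈ S0, ω w = b w} ×ˢ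
        Set.pi univ (fun v : FW M m => {ω : PercSpace 2 M | ∀ u ∈ T v, ω u = b (e v u)}) := by
    ext x
    simp only [mem_preimage, mem_setOf_eq, mem_prod, Set.mem_pi, mem_univ, true_implies]
    constructor
    · intro h
      refine ⟨fun w hw => ?_, fun v u hu => ?_⟩
      · have hw' := Finset.mem_filter.1 hw
        rw [← glue_of_le x w hw'.2]; exact h w hw'.1
      · have := h (e v u) (Finset.mem_preimage.1 hu)
        rw [← this, ← sh_glue x v]
        rfl
    · rintro ⟨h1, h2⟩ w hw
      by_cases hl : w.1.length ≤ m
      · rw [glue_of_le x w hl]; exact h1 w (Finset.mem_filter.2 ⟨hw, hl⟩)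
      · have hv : (w.1.take m).length = m := by simp; omega
        have hd : w.1.drop m ≠ [] := by simp; omega
        have hE : e ⟨w.1.take m, hv⟩ ⟨w.1.drop m, hd⟩ = w := by
          apply Subtype.ext; simp [e]
        have := h2 ⟨w.1.take m, hv⟩ ⟨w.1.drop m, hd⟩ (Finset.mem_preimage.2 (by rw [hE]; exact hw))
        rw [hE] at this
        rw [← this]
        simp [glue, hl]
  rw [hpre, Measure.prod_prod, Measure.pi_pi, hP.2]
  simp_rw [fun v => hP.2 (T v) (fun u => b (e v u))]
  rw [← Finset.prod_filter_mul_prod_filter_not S (fun w => w.1.length ≤ m)]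
  congr 1
  rw [← Finset.prod_fiberwise_of_maps_to (s := S1) (t := Finset.univ.image (fun v : FW M m => v.1))
    (g := fun w : Word 2 M => w.1.take m)]
  · rw [Finset.prod_image (fun a _ b _ h => Subtype.ext h)]
    refine Finset.prod_congr rfl fun v _ => ?_
    symm
    refine Finset.prod_bij' (fun w _ => if h : w.1.drop m ≠ [] then ⟨w.1.drop m, h⟩ else w)
      (fun u _ => e v u) ?_ ?_ ?_ ?_ ?_
    all_goals obtain ⟨v, rfl⟩ := v
    · intro w hw
      simp only [S1, Finset.mem_filter] at hw
      have hd : w.1.drop v.length ≠ [] := by simp; omega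
      simp only [hd, ne_eq, not_false_eq_true, dite_true, T, Finset.mem_preimage]
      have : e ⟨v, rfl⟩ ⟨w.1.drop v.length, hd⟩ = w := by
        apply Subtype.ext
        simp only [e]
        conv_lhs => rw [← hw.2]
        simp [hw.2]
        nth_rewrite 1 [← hw.2]
        exact List.take_append_drop _ _
      rw [this]; exact hw.1.1
    · intro u hu
      have hu0 : u.1 ≠ [] := u.2
      simp only [S1, Finset.mem_filter, e]
      exact ⟨⟨Finset.mem_preimage.1 hu, by simp [hu0]⟩, by simp⟩
    · intro w hw
      simp only [S1, Finset.mem_filter] at hw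
      have hd : w.1.drop v.length ≠ [] := by simp; omega
      simp only [hd, ne_eq, not_false_eq_true, dite_true]
      apply Subtype.ext
      simp only [e]
      nth_rewrite 1 [← hw.2]
      exact List.take_append_drop _ _
    · intro u hu
      have hu0 : u.1 ≠ [] := u.2
      simp [e, hu0]
    · intro w hw
      simp only [S1, Finset.mem_filter] at hw
      have hd : w.1.drop v.length ≠ [] := by simp; omega
      simp only [hd, ne_eq, not_false_eq_true, dite_true]
      have : e ⟨v, rfl⟩ ⟨w.1.drop v.length, hd⟩ = w := by
        apply Subtype.ext
        simp only [e]
        nth_rewrite 1 [← hw.2]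
        exact List.take_append_drop _ _
      rw [this]
  · intro w hw
    simp only [S1, Finset.mem_filter] at hw
    refine Finset.mem_image.2 ⟨⟨w.1.take m, by simp; omega⟩, Finset.mem_univ _, rfl⟩

open Classical in
lemma lint_branch {M : ℕ} {p : ℝ} {P : Measure (PercSpace 2 M)}
    (hP : IsBernoulliPerc 2 M p P) (m : ℕ) (V : Set (PercSpace 2 M)) (hV : MeasurableSet V)
    (hVg : ∀ x, glue m x ∈ V ↔ x.1 ∈ V) (C : Finset (FW M m))
    (g : FW M m → PercSpace 2 M → ℝ≥0∞) (hg : ∀ v, Measurable (g v)) :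
    ∫⁻ ω in V, ∏ v ∈ C, (if Retained 2 M ω v.1 then g v (sh v.1 ω) else 1) ∂P =
      ∫⁻ ω in V, ∏ v ∈ C, (if Retained 2 M ω v.1 then ∫⁻ η, g v η ∂P else 1) ∂P := by
  have := hP.1
  have hm : Measurable (fun ω => ∏ v ∈ C, (if Retained 2 M ω v.1 then g v (sh v.1 ω) else 1)) := by
    refine Finset.measurable_prod _ fun v _ => ?_
    exact Measurable.ite (measurableSet_retained v.1) ((hg v).comp (measurable_sh _)) measurable_const
  rw [← lintegral_indicator hV, ← lintegral_indicator hV]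
  conv_lhs => rw [← glue_bern hP m]
  rw [lintegral_map (hm.indicator hV) measurable_glue]
  refine (lintegral_prod _ ((hm.indicator hV).comp measurable_glue).aemeasurable).trans ?_
  refine lintegral_congr fun ω => ?_
  by_cases hω : ω ∈ V
  · rw [Set.indicator_of_mem hω]
    have h1 : ∀ η : FW M m → PercSpace 2 M,
        V.indicator (fun ω => ∏ v ∈ C, (if Retained 2 M ω v.1 then g v (sh v.1 ω) else 1))
          (glue m (ω, η)) = ∏ v ∈ C, (if Retained 2 M ω v.1 then g v (η v) else 1) := by
      intro η
      rw [Set.indicator_of_mem ((hVg (ω, η)).2 hω)]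
      refine Finset.prod_congr rfl fun v _ => ?_
      rw [sh_glue]
      simp only [retained_glue (ω, η) v.1 v.2.le]
    refine (lintegral_congr h1).trans ?_
    have hX : ∀ v : FW M m, Measurable
        (fun η : PercSpace 2 M => (if Retained 2 M ω v.1 then g v η else 1)) := by
      intro v
      by_cases h : Retained 2 M ω v.1
      · simpa [h] using hg v
      · simp [h]
    have hind := iIndepFun_pi (μ := fun _ : FW M m => P)
      (X := fun v (η : PercSpace 2 M) => (if Retained 2 M ω v.1 then g v η else 1))
      (fun v => (hX v).aemeasurable)
    rw [lintegral_prod_eq_prod_lintegral_of_indepFun C _ hind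
      (fun v => (hX v).comp (measurable_pi_apply v))]
    refine Finset.prod_congr rfl fun v _ => ?_
    have := (measurePreserving_eval (fun _ : FW M m => P) v).lintegral_comp (hX v)
    simp only [Function.eval] at this
    rw [this]
    by_cases h : Retained 2 M ω v.1 <;> simp [h]
  · rw [Set.indicator_of_notMem hω]
    have h1 : ∀ η : FW M m → PercSpace 2 M,
        V.indicator (fun ω => ∏ v ∈ C, (if Retained 2 M ω v.1 then g v (sh v.1 ω) else 1))
          (glue m (ω, η)) = 0 := by
      intro η
      rw [Set.indicator_of_notMem]
      rw [hVg]; exact hω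
    exact (lintegral_congr h1).trans (by simp)

open Classical in
/-- Large deviation estimate for one branching step. -/
lemma key_step {M : ℕ} {p : ℝ} {P : Measure (PercSpace 2 M)}
    (hP : IsBernoulliPerc 2 M p P) (m : ℕ) (V : Set (PercSpace 2 M)) (hV : MeasurableSet V)
    (hVg : ∀ x, glue m x ∈ V ↔ x.1 ∈ V) (C : Finset (FW M m))
    (g : FW M m → PercSpace 2 M → ℝ≥0∞) (hg : ∀ v, Measurable (g v)) (γ N : ℝ) (hγ : 0 ≤ γ)
    (hgi : ∀ v ∈ C, ∫⁻ η, g v η ∂P ≤ ENNReal.ofReal (Real.exp (-γ)))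
    (hN : ∀ ω ∈ V, N ≤ ((C.filter fun v => Retained 2 M ω v.1).card : ℝ)) :
    P (V ∩ {ω | 1 ≤ ∏ v ∈ C, (if Retained 2 M ω v.1 then g v (sh v.1 ω) else 1)}) ≤
      ENNReal.ofReal (Real.exp (-γ * N)) * P V := by
  have := hP.1
  have hm : Measurable (fun ω => ∏ v ∈ C, (if Retained 2 M ω v.1 then g v (sh v.1 ω) else 1)) := by
    refine Finset.measurable_prod _ fun v _ => ?_
    exact Measurable.ite (measurableSet_retained v.1) ((hg v).comp (measurable_sh _)) measurable_const
  calc P (V ∩ {ω | 1 ≤ ∏ v ∈ C, (if Retained 2 M ω v.1 then g v (sh v.1 ω) else 1)})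
      = (P.restrict V) {ω | 1 ≤ ∏ v ∈ C, (if Retained 2 M ω v.1 then g v (sh v.1 ω) else 1)} := by
        rw [Measure.restrict_apply (measurableSet_le measurable_const hm), inter_comm]
    _ ≤ ∫⁻ ω in V, ∏ v ∈ C, (if Retained 2 M ω v.1 then g v (sh v.1 ω) else 1) ∂P := by
        simpa using mul_meas_ge_le_lintegral (μ := P.restrict V) hm 1
    _ = ∫⁻ ω in V, ∏ v ∈ C, (if Retained 2 M ω v.1 then ∫⁻ η, g v η ∂P else 1) ∂P :=
        lint_branch hP m V hV hVg C g hg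
    _ ≤ ∫⁻ ω in V, ENNReal.ofReal (Real.exp (-γ * N)) ∂P := by
        refine setLIntegral_mono' hV fun ω hω => ?_
        rw [← Finset.prod_filter]
        calc ∏ v ∈ C.filter (fun v => Retained 2 M ω v.1), ∫⁻ η, g v η ∂P
            ≤ ∏ v ∈ C.filter (fun v => Retained 2 M ω v.1), ENNReal.ofReal (Real.exp (-γ)) :=
              Finset.prod_le_prod' fun v hv => hgi v (Finset.mem_filter.1 hv).1
          _ = ENNReal.ofReal (Real.exp (-γ * ((C.filter fun v => Retained 2 M ω v.1).card : ℝ))) := by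
              rw [Finset.prod_const, ← ENNReal.ofReal_pow (Real.exp_nonneg _), ← Real.exp_nat_mul]
              ring_nf
          _ ≤ _ := by
              apply ENNReal.ofReal_le_ofReal
              apply Real.exp_le_exp.2
              have := hN ω hω
              nlinarith
    _ = _ := by simp

lemma prob_retained {M : ℕ} {p : ℝ} {P : Measure (PercSpace 2 M)}
    (hP : IsBernoulliPerc 2 M p P) (w : List (Alpha 2 M)) :
    P {ω | Retained 2 M ω w} = ENNReal.ofReal p ^ w.length := by
  classical
  let S : Finset (Word 2 M) := Finset.univ.image
    (fun k : Fin w.length => (⟨w.take (k + 1), by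
      have := k.2
      have h : 0 < (w.take (k + 1)).length := by simp
      exact List.length_pos_iff.1 h⟩ : Word 2 M))
  have hS : {ω | Retained 2 M ω w} = {ω : PercSpace 2 M | ∀ w ∈ S, ω w = (fun _ => true) w} := by
    ext ω
    simp only [mem_setOf_eq, S, Finset.mem_image, Finset.mem_univ, true_and]
    constructor
    · rintro h _ ⟨k, rfl⟩
      exact h _ _ (List.take_prefix _ _)
    · intro h u hu hp
      have hl := hp.length_le
      have hu0 : 0 < u.length := List.length_pos_iff.2 hu
      refine h ⟨u, hu⟩ ⟨⟨u.length - 1, by omega⟩, ?_⟩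
      apply Subtype.ext
      simp only
      rw [Nat.sub_add_cancel hu0]
      exact (List.prefix_iff_eq_take.1 hp).symm
  rw [hS, hP.2]
  simp only [if_true, Finset.prod_const]
  congr 1
  rw [Finset.card_image_of_injective]
  · simp
  · intro a b h
    have := congrArg (fun w : Word 2 M => w.1.length) h
    simp at this
    apply Fin.ext
    omega

/-! ### Geometry of words and lines -/

lemma wordBase_cons {M : ℕ} (hM : 2 ≤ M) (c : Alpha 2 M) (w : List (Alpha 2 M)) (i : Fin 2) :
    wordBase 2 M (c :: w) i = (M : ℝ)⁻¹ * ((c i : ℝ) + wordBase 2 M w i) := by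
  have hM0 : (M : ℝ) ≠ 0 := by positivity
  unfold wordBase
  rw [mul_add, Finset.mul_sum]
  refine (Fin.sum_univ_succ (n := w.length) (fun j : Fin (w.length + 1) =>
    (((c :: w).get j) i : ℝ) * (M : ℝ) ^ (-(j : ℤ) - 1))).trans ?_
  congr 1
  · simp [mul_comm]
    left; rfl
  · refine Finset.sum_congr rfl fun j _ => ?_
    have : (-(((Fin.succ j : Fin (w.length + 1)) : ℕ) : ℤ) - 1) = (-(j : ℤ) - 1) + (-1) := by
      simp; ring
    rw [this, zpow_add₀ hM0, zpow_neg_one]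
    simp
    ring

lemma wordBase_nil {M : ℕ} (i : Fin 2) : wordBase 2 M [] i = 0 := by
  simp [wordBase]

lemma wordBase_append {M : ℕ} (hM : 2 ≤ M) (w u : List (Alpha 2 M)) (i : Fin 2) :
    wordBase 2 M (w ++ u) i = wordBase 2 M w i + ((M : ℝ) ^ w.length)⁻¹ * wordBase 2 M u i := by
  have hM0 : (M : ℝ) ≠ 0 := by positivity
  induction w with
  | nil => simp [wordBase_nil]
  | cons c w ih =>
    rw [List.cons_append, wordBase_cons hM, wordBase_cons hM, ih, List.length_cons, pow_succ]
    field_simp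
    ring

lemma wordBase_nonneg {M : ℕ} (w : List (Alpha 2 M)) (i : Fin 2) :
    0 ≤ wordBase 2 M w i := by
  unfold wordBase
  positivity

lemma wordBase_add_le {M : ℕ} (hM : 2 ≤ M) (w : List (Alpha 2 M)) (i : Fin 2) :
    wordBase 2 M w i + ((M : ℝ) ^ w.length)⁻¹ ≤ 1 := by
  have hM0 : (0 : ℝ) < M := by positivity
  induction w with
  | nil => simp [wordBase_nil]
  | cons c w ih =>
    rw [wordBase_cons hM, List.length_cons, pow_succ, mul_inv]
    have hc : (c i : ℝ) + 1 ≤ M := by exact_mod_cast (c i).2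
    have : (M : ℝ)⁻¹ * (c i + wordBase 2 M w i) + ((M : ℝ) ^ w.length)⁻¹ * (M : ℝ)⁻¹ =
        (M : ℝ)⁻¹ * (c i + (wordBase 2 M w i + ((M : ℝ) ^ w.length)⁻¹)) := by ring
    rw [this, inv_mul_le_iff₀ hM0]
    linarith

lemma wordBase_le_one {M : ℕ} (hM : 2 ≤ M) (w : List (Alpha 2 M)) (i : Fin 2) :
    wordBase 2 M w i ≤ 1 := by
  have := wordBase_add_le hM w i
  have h : (0 : ℝ) ≤ ((M : ℝ) ^ w.length)⁻¹ := by positivity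
  linarith

lemma ap_append {M : ℕ} (hM : 2 ≤ M) (s a : ℝ) (w u : List (Alpha 2 M)) :
    ap s a (w ++ u) = ap s (ap s a w) u := by
  have hM0 : (M : ℝ) ≠ 0 := by positivity
  unfold ap
  rw [wordBase_append hM, wordBase_append hM, List.length_append, pow_add]
  field_simp
  ring

lemma exists_word {M : ℕ} (hM : 2 ≤ M) (n : ℕ) : ∀ i j : ℕ, i < M ^ n → j < M ^ n →
    ∃ w : FW M n, (M : ℝ) ^ n * wordBase 2 M w.1 0 = i ∧ (M : ℝ) ^ n * wordBase 2 M w.1 1 = j := by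
  have hM0 : (M : ℝ) ≠ 0 := by positivity
  induction n with
  | zero =>
    intro i j hi hj
    simp at hi hj
    subst hi hj
    exact ⟨⟨[], rfl⟩, by simp [wordBase_nil]⟩
  | succ n ih =>
    intro i j hi hj
    have hp : 0 < M ^ n := by positivity
    obtain ⟨w, h0, h1⟩ := ih (i % M ^ n) (j % M ^ n) (Nat.mod_lt _ hp) (Nat.mod_lt _ hp)
    have hci : i / M ^ n < M := Nat.div_lt_of_lt_mul (by rwa [← pow_succ])
    have hcj : j / M ^ n < M := Nat.div_lt_of_lt_mul (by rwa [← pow_succ])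
    refine ⟨⟨![⟨i / M ^ n, hci⟩, ⟨j / M ^ n, hcj⟩] :: w.1, by simp [w.2]⟩, ?_, ?_⟩
    · have : (i : ℝ) = M ^ n * ((i / M ^ n : ℕ) : ℝ) + ((i % M ^ n : ℕ) : ℝ) := by
        exact_mod_cast (Nat.div_add_mod i (M ^ n)).symm
      rw [this, ← h0]
      simp only [wordBase_cons hM, pow_succ]
      simp
      field_simp
    · have : (j : ℝ) = M ^ n * ((j / M ^ n : ℕ) : ℝ) + ((j % M ^ n : ℕ) : ℝ) := by
        exact_mod_cast (Nat.div_add_mod j (M ^ n)).symm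
      rw [this, ← h1]
      simp only [wordBase_cons hM, pow_succ]
      simp
      field_simp

open Classical in
/-- Words of length `n` whose cube is crossed well inside by the line `(s, a)`. -/
def Cin (M n : ℕ) (s a : ℝ) : Finset (FW M n) :=
  Finset.univ.filter fun v => s / 2 ≤ ap s a v.1 ∧ ap s a v.1 ≤ 1 + s / 2

/-- The admissible lines. -/
def Tset (K : ℕ) : Set (ℝ × ℝ) :=
  {x | 1 / (K : ℝ) ≤ x.1 ∧ x.1 ≤ K ∧ x.1 / 4 ≤ x.2 ∧ x.2 ≤ 1 + 3 * x.1 / 4}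

lemma exists_range {K : ℕ} (hK : 1 ≤ K) {s a : ℝ} (h : (s, a) ∈ Tset K) :
    ∃ lo hi : ℝ, 0 ≤ lo ∧ hi ≤ 1 ∧ 1 / (4 * (K : ℝ)) ≤ hi - lo ∧
      ∀ x, lo < x → x ≤ hi → 0 ≤ a - s * x ∧ a - s * x < 1 := by
  obtain ⟨h1, h2, h3, h4⟩ := h
  simp only at h1 h2 h3 h4
  have hK0 : (1 : ℝ) ≤ K := by exact_mod_cast hK
  have hs : 0 < s := lt_of_lt_of_le (by positivity) h1
  refine ⟨max 0 ((a - 1) / s), min 1 (a / s), le_max_left _ _, min_le_left _ _, ?_, ?_⟩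
  · have k1 : 1 / (4 * (K : ℝ)) ≤ 1 / 4 := by
      apply one_div_le_one_div_of_le <;> linarith
    have k2 : 1 / (4 * (K : ℝ)) ≤ 1 / s := by
      apply one_div_le_one_div_of_le <;> linarith
    have k3 : 1 / 4 ≤ a / s := by rw [le_div_iff₀ hs]; linarith
    have k4 : (a - 1) / s ≤ 3 / 4 := by rw [div_le_iff₀ hs]; linarith
    have k5 : a / s - (a - 1) / s = 1 / s := by field_simp; ring
    rcases max_cases 0 ((a - 1) / s) with ⟨e, _⟩ | ⟨e, _⟩ <;>
      rcases min_cases 1 (a / s) with ⟨e', _⟩ | ⟨e', _⟩ <;> rw [e, e'] <;> linarith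
  · intro x hx hx'
    have h1 := (max_lt_iff.1 hx).2
    have h2 := (le_min_iff.1 hx').2
    rw [div_lt_iff₀ hs] at h1
    rw [le_div_iff₀ hs] at h2
    constructor <;> linarith

lemma card_Cin {M : ℕ} (hM : 2 ≤ M) {K : ℕ} (hK : 1 ≤ K) (n : ℕ) {s a : ℝ}
    (h : (s, a) ∈ Tset K) :
    (M : ℝ) ^ n / (4 * K) - 1 ≤ (Cin M n s a).card := by
  classical
  obtain ⟨lo, hi, hlo, hhi, hd, H⟩ := exists_range hK h
  have hD : (0 : ℝ) < (M : ℝ) ^ n := by positivity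
  set D : ℝ := (M : ℝ) ^ n with hDdef
  let I : Finset ℤ := Finset.Ioc ⌊D * lo - 1 / 2⌋ ⌊D * hi - 1 / 2⌋
  have hI : ∀ i ∈ I, ∃ w : FW M n, w ∈ Cin M n s a ∧ D * wordBase 2 M w.1 0 = i := by
    intro i hi'
    obtain ⟨g1, g2⟩ := Finset.mem_Ioc.1 hi'
    have g1' : D * lo - 1 / 2 < i := Int.floor_lt.1 g1
    have g2' : (i : ℝ) ≤ D * hi - 1 / 2 := Int.le_floor.1 g2
    have hx := H ((i + 1 / 2) / D) (by rw [lt_div_iff₀ hD]; linarith)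
      (by rw [div_le_iff₀ hD]; linarith)
    have hDx : D * ((i + 1 / 2) / D) = i + 1 / 2 := by field_simp
    have hDs : D * (a - s * ((i + 1 / 2) / D)) = D * a - s * (i + 1 / 2) := by
      rw [mul_sub, mul_left_comm, hDx]
    have y1 : 0 ≤ D * a - s * (i + 1 / 2) := by
      have := mul_nonneg hD.le hx.1
      rwa [hDs] at this
    have y2 : D * a - s * (i + 1 / 2) < D := by
      have := mul_lt_mul_of_pos_left hx.2 hD
      rwa [hDs, mul_one] at this
    have i0 : 0 ≤ i := by
      have : (-1 : ℝ) < i := by nlinarith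
      have : (-1 : ℤ) < i := by exact_mod_cast this
      omega
    have i1 : (i : ℝ) < D := by nlinarith
    obtain ⟨i, rfl⟩ := Int.eq_ofNat_of_zero_le i0
    set j : ℕ := ⌊D * a - s * ((i : ℤ) + 1 / 2)⌋₊ with hj
    have j1 : (j : ℝ) ≤ D * a - s * ((i : ℤ) + 1 / 2) := Nat.floor_le y1
    have j2 : D * a - s * ((i : ℤ) + 1 / 2) < j + 1 := Nat.lt_floor_add_one _
    have i1' : i < M ^ n := by
      have : (i : ℝ) < (M : ℝ) ^ n := by simpa using i1
      exact_mod_cast this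
    have j1' : j < M ^ n := by
      have : (j : ℝ) < (M : ℝ) ^ n := lt_of_le_of_lt j1 y2
      exact_mod_cast this
    obtain ⟨w, hw0, hw1⟩ := exists_word hM n i j i1' j1'
    refine ⟨w, ?_, by simpa using hw0⟩
    have hap : ap s a w.1 = D * a - j - s * i := by
      unfold ap
      rw [w.2, ← hw0, ← hw1]; ring
    simp only [Cin, Finset.mem_filter, Finset.mem_univ, true_and, hap]
    push_cast at j1 j2
    constructor <;> linarith
  have hne : Nonempty (FW M n) :=
    ⟨(exists_word hM n 0 0 (by positivity) (by positivity)).choose⟩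
  choose! φ hφ1 hφ2 using hI
  have hcard : I.card ≤ (Cin M n s a).card := by
    refine Finset.card_le_card_of_injOn φ hφ1 ?_
    intro i hi' j hj' hij
    have e1 := hφ2 i hi'
    have e2 := hφ2 j hj'
    rw [hij, e2] at e1
    exact_mod_cast e1.symm
  have hIc : D / (4 * K) - 1 ≤ (I.card : ℝ) := by
    have : (⌊D * hi - 1 / 2⌋ - ⌊D * lo - 1 / 2⌋ : ℤ) ≤ (I.card : ℤ) := by
      simp only [I, Int.card_Ioc]
      exact Int.self_le_toNat _
    have hr : ((⌊D * hi - 1 / 2⌋ : ℝ) - ⌊D * lo - 1 / 2⌋) ≤ (I.card : ℝ) := by exact_mod_cast this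
    have f1 := Int.lt_floor_add_one (D * hi - 1 / 2)
    have f2 := Int.floor_le (D * lo - 1 / 2)
    have : D / (4 * K) ≤ D * (hi - lo) := by
      calc D / (4 * K) = D * (1 / (4 * K)) := by ring
        _ ≤ _ := by gcongr
    nlinarith
  have : (I.card : ℝ) ≤ (Cin M n s a).card := by exact_mod_cast hcard
  linarith

/-- Finite nets of lines. -/
lemma exists_net {M : ℕ} (hM : 2 ≤ M) {K : ℕ} (hK : 1 ≤ K) (n : ℕ) :
    ∃ Λ : Finset (ℝ × ℝ), (↑Λ ⊆ Tset K) ∧ (Λ.card : ℝ) ≤ (49 * K * (K + 1) * (M : ℝ) ^ n) ^ 2 ∧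
      ∀ x ∈ Tset K, ∃ y ∈ Λ, ∀ v ∈ Cin M n y.1 y.2,
        3 * x.1 / 8 ≤ ap x.1 x.2 v.1 ∧ ap x.1 x.2 v.1 ≤ 1 + 5 * x.1 / 8 := by
  classical
  have hK0 : (1 : ℝ) ≤ K := by exact_mod_cast hK
  have hD : (1 : ℝ) ≤ (M : ℝ) ^ n := one_le_pow₀ (by exact_mod_cast (by omega : 1 ≤ M))
  let B : ℕ := 48 * K * (K + 1) * M ^ n + 1
  let R : ℝ := 24 * K * (M : ℝ) ^ n
  have hR : 0 < R := by positivity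
  let φ : ℝ × ℝ → ℕ × ℕ := fun x => (⌊R * x.1⌋₊, ⌊R * x.2⌋₊)
  let cells : Finset (ℕ × ℕ) := (Finset.range B ×ˢ Finset.range B).filter
    fun c => ∃ x ∈ Tset K, φ x = c
  have hc : ∀ c ∈ cells, ∃ x ∈ Tset K, φ x = c := fun c hc => (Finset.mem_filter.1 hc).2
  choose! ψ hψ1 hψ2 using hc
  refine ⟨cells.image ψ, ?_, ?_, ?_⟩
  · intro x hx
    simp only [Finset.coe_image, mem_image, Finset.mem_coe] at hx
    obtain ⟨c, hc, rfl⟩ := hx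
    exact hψ1 c hc
  · have h1 : (cells.image ψ).card ≤ B * B := by
      refine Finset.card_image_le.trans ((Finset.card_filter_le _ _).trans ?_)
      simp
    have h2 : (B : ℝ) ≤ 49 * K * (K + 1) * (M : ℝ) ^ n := by
      simp only [B]
      push_cast
      have : (1 : ℝ) ≤ K * (K + 1) * (M : ℝ) ^ n := by
        have h3 : (1 : ℝ) ≤ K * (K + 1) := by nlinarith
        nlinarith
      linarith
    calc ((cells.image ψ).card : ℝ) ≤ (B : ℝ) * B := by exact_mod_cast h1
      _ ≤ _ := by rw [sq]; gcongr
  · intro x hx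
    have hx' := hx
    obtain ⟨h1, h2, h3, h4⟩ := hx'
    have hs : 0 < x.1 := lt_of_lt_of_le (by positivity) h1
    have hbd : ∀ z : ℝ, z < 2 * (K + 1) → ⌊R * z⌋₊ < B := by
      intro z hz
      rw [Nat.floor_lt' (by simp [B])]
      have e : ((B : ℕ) : ℝ) = R * (2 * (K + 1)) + 1 := by simp only [B, R]; push_cast; ring
      rw [e]
      nlinarith
    have hmem : φ x ∈ cells := by
      refine Finset.mem_filter.2 ⟨?_, x, hx, rfl⟩
      rw [Finset.mem_product, Finset.mem_range, Finset.mem_range]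
      exact ⟨hbd _ (by linarith), hbd _ (by linarith)⟩
    refine ⟨ψ (φ x), Finset.mem_image_of_mem _ hmem, ?_⟩
    have hy := hψ1 _ hmem
    have hyφ := hψ2 _ hmem
    set y := ψ (φ x)
    obtain ⟨g1, g2, g3, g4⟩ := hy
    have hsy : 0 < y.1 := lt_of_lt_of_le (by positivity) g1
    have hclose : ∀ u v : ℝ, 0 ≤ u → 0 ≤ v → ⌊R * u⌋₊ = ⌊R * v⌋₊ → |u - v| ≤ 1 / R := by
      intro u v hu hv huv
      have a1 := Nat.floor_le (mul_nonneg hR.le hu)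
      have a2 := Nat.lt_floor_add_one (R * u)
      have b1 := Nat.floor_le (mul_nonneg hR.le hv)
      have b2 := Nat.lt_floor_add_one (R * v)
      rw [huv] at a1 a2
      rw [abs_le]
      constructor
      · rw [neg_le_iff_add_nonneg]
        have : 0 ≤ R * (u - v) + 1 := by nlinarith
        calc (0 : ℝ) ≤ (R * (u - v) + 1) / R := by positivity
          _ = _ := by field_simp
      · rw [le_div_iff₀ hR]; nlinarith
    have c1 : |x.1 - y.1| ≤ 1 / R :=
      hclose _ _ hs.le hsy.le (congrArg Prod.fst hyφ).symm
    have c2 : |x.2 - y.2| ≤ 1 / R :=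
      hclose _ _ (by linarith) (by linarith) (congrArg Prod.snd hyφ).symm
    intro v hv
    obtain ⟨v1, v2⟩ := (Finset.mem_filter.1 hv).2
    have hb0 := wordBase_nonneg v.1 0
    have hb1 := wordBase_le_one hM v.1 0
    have hdiff : |ap x.1 x.2 v.1 - ap y.1 y.2 v.1| ≤ (M : ℝ) ^ n * (2 / R) := by
      have e : ap x.1 x.2 v.1 - ap y.1 y.2 v.1 =
          (M : ℝ) ^ n * ((x.2 - y.2) - (x.1 - y.1) * wordBase 2 M v.1 0) := by
        unfold ap; rw [v.2]; ring
      rw [e, abs_mul, abs_of_pos (by positivity : (0 : ℝ) < (M : ℝ) ^ n)]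
      gcongr
      refine (abs_sub _ _).trans ?_
      rw [abs_mul, abs_of_nonneg hb0]
      have : |x.1 - y.1| * wordBase 2 M v.1 0 ≤ 1 / R * 1 := by gcongr
      calc _ ≤ 1 / R + 1 / R * 1 := add_le_add c2 this
        _ = 2 / R := by ring
    have e1 : (M : ℝ) ^ n * (2 / R) = 1 / (12 * K) := by simp only [R]; field_simp; norm_num
    have e2 : 1 / R ≤ 1 / (24 * K) := by
      apply one_div_le_one_div_of_le (by positivity)
      simp only [R]; nlinarith
    have e3 : 1 / (12 * (K : ℝ)) = (1 / K) / 12 := by field_simp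
    have e4 : 1 / (24 * (K : ℝ)) = (1 / K) / 24 := by field_simp
    rw [e1, e3] at hdiff
    rw [e4] at e2
    rw [abs_le] at hdiff c1
    constructor <;> linarith [hdiff.1, hdiff.2, c1.1, c1.2]

/-! ### Uniform growth of the number of retained crossed cubes -/

/-- `Λ` is a good finite net of lines at level `n`. -/
def IsNet (M K n : ℕ) (Λ : Finset (ℝ × ℝ)) : Prop :=
  (↑Λ ⊆ Tset K) ∧ (Λ.card : ℝ) ≤ (49 * K * (K + 1) * (M : ℝ) ^ n) ^ 2 ∧
      ∀ x ∈ Tset K, ∃ y ∈ Λ, ∀ v ∈ Cin M n y.1 y.2,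
        3 * x.1 / 8 ≤ ap x.1 x.2 v.1 ∧ ap x.1 x.2 v.1 ≤ 1 + 5 * x.1 / 8

open Classical in
/-- Number of retained words in `C`. -/
def cnt {M n : ℕ} (C : Finset (FW M n)) (ω : PercSpace 2 M) : ℕ :=
  (C.filter fun v => Retained 2 M ω v.1).card

/-- All lines of the net cross many retained cubes of level `n`. -/
def Uev (M n : ℕ) (Λ : Finset (ℝ × ℝ)) (N : ℝ) : Set (PercSpace 2 M) :=
  {ω | ∀ y ∈ Λ, N ≤ (cnt (Cin M n y.1 y.2) ω : ℝ)}

open Classical in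
lemma cnt_eq_sum {M n : ℕ} (C : Finset (FW M n)) (ω : PercSpace 2 M) :
    (cnt C ω : ℝ) = ∑ v ∈ C, {ω : PercSpace 2 M | Retained 2 M ω v.1}.indicator (fun _ => (1 : ℝ)) ω := by
  simp [cnt, Set.indicator_apply]

lemma measurable_cnt {M n : ℕ} (C : Finset (FW M n)) :
    Measurable (fun ω : PercSpace 2 M => (cnt C ω : ℝ)) := by
  simp_rw [cnt_eq_sum]
  exact Finset.measurable_sum _ fun v _ => measurable_const.indicator (measurableSet_retained _)

lemma measurableSet_Uev (M n : ℕ) (Λ : Finset (ℝ × ℝ)) (N : ℝ) : MeasurableSet (Uev M n Λ N) := by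
  have : Uev M n Λ N = ⋂ y ∈ Λ, {ω | N ≤ (cnt (Cin M n y.1 y.2) ω : ℝ)} := by
    ext; simp [Uev]
  rw [this]
  exact Finset.measurableSet_biInter _ fun y _ => measurableSet_le measurable_const (measurable_cnt _)

lemma glue_mem_Uev {M n : ℕ} (Λ : Finset (ℝ × ℝ)) (N : ℝ)
    (x : PercSpace 2 M × (FW M n → PercSpace 2 M)) : glue n x ∈ Uev M n Λ N ↔ x.1 ∈ Uev M n Λ N := by
  classical
  have : ∀ C : Finset (FW M n), cnt C (glue n x) = cnt C x.1 := by
    intro C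
    unfold cnt
    congr 1
    apply Finset.filter_congr
    intro v _
    exact retained_glue x v.1 v.2.le
  simp [Uev, this]

lemma union_step {M : ℕ} {P : Measure (PercSpace 2 M)} [IsProbabilityMeasure P]
    (V W : Set (PercSpace 2 M)) (Λ : Finset (ℝ × ℝ)) (B : ℝ × ℝ → Set (PercSpace 2 M)) (ε : ℝ)
    (hε : 0 ≤ ε) (h : V ⊆ W ∪ ⋃ y ∈ Λ, V ∩ B y)
    (hB : ∀ y ∈ Λ, P (V ∩ B y) ≤ ENNReal.ofReal ε * P V) :
    (1 - Λ.card * ε) * P.real V ≤ P.real W := by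
  have h1 : P.real V ≤ P.real W + ∑ y ∈ Λ, P.real (V ∩ B y) := by
    calc P.real V ≤ P.real (W ∪ ⋃ y ∈ Λ, V ∩ B y) := measureReal_mono h
      _ ≤ P.real W + P.real (⋃ y ∈ Λ, V ∩ B y) := measureReal_union_le _ _
      _ ≤ _ := by gcongr; exact measureReal_biUnion_finset_le _ _
  have h2 : ∑ y ∈ Λ, P.real (V ∩ B y) ≤ ∑ y ∈ Λ, ε * P.real V := by
    refine Finset.sum_le_sum fun y hy => ?_
    have := ENNReal.toReal_mono (by finiteness) (hB y hy)
    rwa [ENNReal.toReal_mul, ENNReal.toReal_ofReal hε] at this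
  rw [Finset.sum_const, nsmul_eq_mul] at h2
  linarith

lemma laplace {M : ℕ} {p : ℝ} (hp : 0 ≤ p) {P : Measure (PercSpace 2 M)}
    (hP : IsBernoulliPerc 2 M p P) (m : ℕ) (C : Finset (FW M m)) (Bd : ℝ) (hBd : 1 ≤ Bd)
    (hCB : (C.card : ℝ) ≤ Bd) (hC : 3 ≤ p ^ m * C.card) :
    ∫⁻ ω, ENNReal.ofReal (Real.exp (1 / (2 * Bd ^ 2) * (2 - cnt C ω))) ∂P ≤
      ENNReal.ofReal (Real.exp (-(1 / (4 * Bd ^ 2)))) := by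
  classical
  have := hP.1
  set t : ℝ := 1 / (2 * Bd ^ 2) with ht
  have ht0 : 0 < t := by positivity
  have hcle : ∀ ω, (cnt C ω : ℝ) ≤ Bd := fun ω =>
    le_trans (by exact_mod_cast Finset.card_filter_le _ _) hCB
  have hc0 : ∀ ω, (0 : ℝ) ≤ cnt C ω := fun ω => by positivity
  have htB : t * Bd ^ 2 = 1 / 2 := by rw [ht]; field_simp
  have hpt : ∀ ω, Real.exp (t * (2 - cnt C ω)) ≤
      Real.exp (2 * t) * (1 - t * cnt C ω + t ^ 2 * Bd ^ 2) := by
    intro ω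
    have e : t * (2 - cnt C ω) = 2 * t + (-(t * cnt C ω)) := by ring
    rw [e, Real.exp_add]
    gcongr
    have hx0 : 0 ≤ t * cnt C ω := mul_nonneg ht0.le (hc0 ω)
    have hx1 : t * cnt C ω ≤ 1 := by
      calc t * cnt C ω ≤ t * Bd := by gcongr; exact hcle ω
        _ ≤ t * Bd ^ 2 := by gcongr; nlinarith
        _ ≤ 1 := by linarith
    have := Real.abs_exp_sub_one_sub_id_le (x := -(t * cnt C ω)) (by rw [abs_neg, abs_of_nonneg hx0]; exact hx1)
    have h2 := (abs_le.1 this).2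
    have h3 : (t * (cnt C ω : ℝ)) ^ 2 ≤ t ^ 2 * Bd ^ 2 := by
      rw [mul_pow]; gcongr; exact hcle ω
    nlinarith
  have hIntg : Integrable (fun ω => (cnt C ω : ℝ)) P := by
    refine Integrable.of_bound (measurable_cnt C).aestronglyMeasurable Bd (Filter.Eventually.of_forall fun ω => ?_)
    rw [Real.norm_of_nonneg (hc0 ω)]; exact hcle ω
  have hmean : ∫ ω, (cnt C ω : ℝ) ∂P = p ^ m * C.card := by
    simp_rw [cnt_eq_sum]
    rw [integral_finsetSum]
    · have : ∀ v ∈ C, ∫ ω, {ω : PercSpace 2 M | Retained 2 M ω v.1}.indicator (fun _ => (1 : ℝ)) ω ∂P = p ^ m := by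
        intro v _
        rw [integral_indicator_const _ (measurableSet_retained v.1)]
        simp [Measure.real, prob_retained hP, v.2, ENNReal.toReal_ofReal hp]
      rw [Finset.sum_congr rfl this]
      simp [mul_comm]
    · intro v _
      exact (integrable_const 1).indicator (measurableSet_retained v.1)
  have hIntg2 : Integrable (fun ω => Real.exp (2 * t) * (1 - t * cnt C ω + t ^ 2 * Bd ^ 2)) P := by
    refine Integrable.const_mul ?_ _
    exact ((integrable_const _).sub (hIntg.const_mul t)).add (integrable_const _)
  calc ∫⁻ ω, ENNReal.ofReal (Real.exp (t * (2 - cnt C ω))) ∂P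
      ≤ ∫⁻ ω, ENNReal.ofReal (Real.exp (2 * t) * (1 - t * cnt C ω + t ^ 2 * Bd ^ 2)) ∂P :=
        lintegral_mono fun ω => ENNReal.ofReal_le_ofReal (hpt ω)
    _ = ENNReal.ofReal (∫ ω, Real.exp (2 * t) * (1 - t * cnt C ω + t ^ 2 * Bd ^ 2) ∂P) := by
        rw [ofReal_integral_eq_lintegral_ofReal hIntg2]
        exact Filter.Eventually.of_forall fun ω => (Real.exp_nonneg _).trans (hpt ω)
    _ ≤ _ := by
        apply ENNReal.ofReal_le_ofReal
        have e : ∫ ω, Real.exp (2 * t) * (1 - t * cnt C ω + t ^ 2 * Bd ^ 2) ∂P =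
            Real.exp (2 * t) * (1 - t * (p ^ m * C.card) + t ^ 2 * Bd ^ 2) := by
          rw [integral_const_mul, integral_add, integral_sub, integral_const_mul, hmean]
          · simp
          · exact integrable_const _
          · exact hIntg.const_mul t
          · exact (integrable_const _).sub (hIntg.const_mul t)
          · exact integrable_const _
        rw [e]
        have h1 : 1 - t * (p ^ m * C.card) + t ^ 2 * Bd ^ 2 ≤ (-(5 / 2) * t) + 1 := by
          nlinarith
        have h2 := Real.add_one_le_exp (-(5 / 2) * t)
        calc Real.exp (2 * t) * (1 - t * (p ^ m * C.card) + t ^ 2 * Bd ^ 2)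
            ≤ Real.exp (2 * t) * Real.exp (-(5 / 2) * t) := by gcongr; linarith
          _ = Real.exp (-(1 / (4 * Bd ^ 2))) := by
              rw [← Real.exp_add]; congr 1; rw [ht]; field_simp; norm_num

lemma step_U {M : ℕ} (hM : 2 ≤ M) {K : ℕ} (hK : 1 ≤ K) {p : ℝ} (hp : 0 ≤ p)
    {P : Measure (PercSpace 2 M)}
    (hP : IsBernoulliPerc 2 M p P) (m0 : ℕ) (hm0 : 3 ≤ p ^ m0 * ((M : ℝ) ^ m0 / (4 * K) - 1))
    (Bd : ℝ) (hBd : 1 ≤ Bd) (hBd' : (Fintype.card (FW M m0) : ℝ) ≤ Bd)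
    (n : ℕ) (Λ Λ' : Finset (ℝ × ℝ)) (hΛ : IsNet M K n Λ) (hΛ' : IsNet M K (n + m0) Λ') (N : ℝ) :
    (1 - Λ'.card * Real.exp (-(1 / (4 * Bd ^ 2)) * N)) * P.real (Uev M n Λ N) ≤
      P.real (Uev M (n + m0) Λ' (2 * N)) := by
  classical
  have := hP.1
  -- partner of a line in the coarser net
  have hpart : ∀ y ∈ Λ', ∃ z ∈ Λ, ∀ v ∈ Cin M n z.1 z.2,
        3 * y.1 / 8 ≤ ap y.1 y.2 v.1 ∧ ap y.1 y.2 v.1 ≤ 1 + 5 * y.1 / 8 :=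
    fun y hy => hΛ.2.2 y (hΛ'.1 hy)
  choose! ρ hpi1 hpi2 using hpart
  set t : ℝ := 1 / (2 * Bd ^ 2) with ht
  have ht0 : 0 < t := by positivity
  let D : ℝ × ℝ → FW M n → Finset (FW M m0) := fun y v => Cin M m0 y.1 (ap y.1 y.2 v.1)
  let g : ℝ × ℝ → FW M n → PercSpace 2 M → ℝ≥0∞ := fun y v ω =>
    ENNReal.ofReal (Real.exp (t * (2 - cnt (D y v) ω)))
  have hg : ∀ y v, Measurable (g y v) := fun y v =>
    ENNReal.measurable_ofReal.comp (Real.measurable_exp.comp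
      ((measurable_const.sub (measurable_cnt _)).const_mul t))
  let C : ℝ × ℝ → Finset (FW M n) := fun y => Cin M n (ρ y).1 (ρ y).2
  refine union_step (Uev M n Λ N) _ Λ' (fun y => {ω | 1 ≤ ∏ v ∈ C y,
    (if Retained 2 M ω v.1 then g y v (sh v.1 ω) else 1)}) _ (Real.exp_nonneg _) ?_ ?_
  · intro ω hω
    by_cases hb : ∃ y ∈ Λ', 1 ≤ ∏ v ∈ C y, (if Retained 2 M ω v.1 then g y v (sh v.1 ω) else 1)
    · obtain ⟨y, hy, h⟩ := hb
      right
      simp only [mem_iUnion]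
      exact ⟨y, hy, hω, h⟩
    · push Not at hb
      left
      intro y hy
      have h1 := hb y hy
      rw [← Finset.prod_filter, ← ENNReal.ofReal_prod_of_nonneg (fun _ _ => Real.exp_nonneg _),
        ← Real.exp_sum, ENNReal.ofReal_lt_one, Real.exp_lt_one_iff, ← Finset.mul_sum] at h1
      have h2 : ∑ v ∈ (C y).filter (fun v => Retained 2 M ω v.1),
          ((2 : ℝ) - cnt (D y v) (sh v.1 ω)) < 0 := by
        by_contra hcon
        push Not at hcon
        have := mul_nonneg ht0.le hcon
        linarith
      rw [Finset.sum_sub_distrib, Finset.sum_const, nsmul_eq_mul] at h2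
      have h3 : N ≤ (((C y).filter (fun v => Retained 2 M ω v.1)).card : ℝ) := hω (ρ y) (hpi1 y hy)
      have h4 : ∑ v ∈ (C y).filter (fun v => Retained 2 M ω v.1), cnt (D y v) (sh v.1 ω) ≤
          cnt (Cin M (n + m0) y.1 y.2) ω := by
        unfold cnt
        rw [← Finset.card_sigma]
        refine Finset.card_le_card_of_injOn
          (fun x : (_ : FW M n) × FW M m0 => (⟨x.1.1 ++ x.2.1, by simp [x.1.2, x.2.2]⟩ : FW M (n + m0))) ?_ ?_
        · rintro ⟨v, u⟩ hx
          simp only [Finset.coe_sigma, Set.mem_sigma_iff, Finset.mem_coe, Finset.mem_filter] at hx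
          obtain ⟨⟨hv1, hv2⟩, hu1, hu2⟩ := hx
          simp only [Finset.coe_filter, mem_setOf_eq]
          refine ⟨?_, (retained_append ω v.1 u.1).2 ⟨hv2, hu2⟩⟩
          have := (Finset.mem_filter.1 hu1).2
          refine Finset.mem_filter.2 ⟨Finset.mem_univ _, ?_⟩
          simp only [ap_append hM]
          exact this
        · rintro ⟨v, u⟩ _ ⟨v', u'⟩ _ hx
          have hx' : v.1 ++ u.1 = v'.1 ++ u'.1 := congrArg Subtype.val hx
          obtain ⟨e1, e2⟩ := List.append_inj hx' (by rw [v.2, v'.2])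
          have e1' := Subtype.ext e1
          have e2' := Subtype.ext e2
          subst e1' e2'
          rfl
      have h5 : (∑ v ∈ (C y).filter (fun v => Retained 2 M ω v.1), (cnt (D y v) (sh v.1 ω) : ℝ)) ≤
          cnt (Cin M (n + m0) y.1 y.2) ω := by exact_mod_cast h4
      linarith
  · intro y hy
    refine key_step hP n _ (measurableSet_Uev M n Λ N) (glue_mem_Uev Λ N) (C y) (g y) (hg y) _ N
      (by positivity) ?_ ?_
    · intro v hv
      obtain ⟨y1, y2, y3, y4⟩ := hΛ'.1 hy
      obtain ⟨v1, v2⟩ := hpi2 y hy v hv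
      have hy0 : 0 < y.1 := lt_of_lt_of_le (by positivity) y1
      have hT : (y.1, ap y.1 y.2 v.1) ∈ Tset K := ⟨y1, y2, by simp only; linarith, by simp only; linarith⟩
      have hcard := card_Cin hM hK m0 hT
      refine laplace hp hP m0 (D y v) Bd hBd (le_trans ?_ hBd') (hm0.trans ?_)
      · exact_mod_cast Finset.card_le_univ _
      · gcongr
    · intro ω hω
      exact hω (ρ y) (hpi1 y hy)

lemma Uev_start {M : ℕ} (hM : 2 ≤ M) {K : ℕ} (hK : 1 ≤ K) {p : ℝ} (hp : 0 < p)
    {P : Measure (PercSpace 2 M)} (hP : IsBernoulliPerc 2 M p P) (n : ℕ) (Λ : Finset (ℝ × ℝ))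
    (hΛ : IsNet M K n Λ) : 0 < P.real (Uev M n Λ ((M : ℝ) ^ n / (4 * K) - 1)) := by
  classical
  have := hP.1
  have hfin : {w : Word 2 M | w.1.length ≤ n}.Finite := by
    have h1 : {l : List (Alpha 2 M) | l.length ≤ n}.Finite := List.finite_length_le _ n
    exact Set.Finite.preimage (Subtype.val_injective.injOn) h1
  let S := hfin.toFinset
  have hsub : {ω : PercSpace 2 M | ∀ w ∈ S, ω w = (fun _ => true) w} ⊆
      Uev M n Λ ((M : ℝ) ^ n / (4 * K) - 1) := by
    intro ω hω y hy
    have h1 := card_Cin hM hK n (hΛ.1 hy)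
    have : cnt (Cin M n y.1 y.2) ω = (Cin M n y.1 y.2).card := by
      unfold cnt
      congr 1
      apply Finset.filter_true_of_mem
      intro v _ u hu hp
      exact hω ⟨u, hu⟩ (by simpa [S] using hp.length_le.trans v.2.le)
    rw [this]; exact h1
  refine lt_of_lt_of_le ?_ (measureReal_mono hsub)
  rw [Measure.real, hP.2]
  simp only [if_true, Finset.prod_const]
  rw [ENNReal.toReal_pow, ENNReal.toReal_ofReal hp.le]
  positivity

set_option maxHeartbeats 1000000 in
lemma exists_params {M : ℕ} (hM : 2 ≤ M) {K : ℕ} (hK : 1 ≤ K) {p : ℝ} (hp0 : ((M : ℝ))⁻¹ < p)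
    (hp1 : p < 1) {P : Measure (PercSpace 2 M)} (hP : IsBernoulliPerc 2 M p P) :
    ∃ (m : ℕ) (Λ : Finset (ℝ × ℝ)) (N q : ℝ), 1 ≤ m ∧ 0 < q ∧ IsNet M K m Λ ∧
      2 * q ≤ P.real (Uev M m Λ N) ∧ Λ.card * Real.exp (-q * N) ≤ 1 / 2 := by
  have hpr := hP.1
  have hM0 : (0 : ℝ) < M := by positivity
  have hM1 : (1 : ℝ) < M := by exact_mod_cast hM
  have hp : 0 < p := lt_trans (by positivity) hp0
  have hK0 : (1 : ℝ) ≤ K := by exact_mod_cast hK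
  have hpM : 1 < p * M := by
    have := mul_lt_mul_of_pos_right hp0 hM0
    rwa [inv_mul_cancel₀ hM0.ne'] at this
  -- the block length
  obtain ⟨m0, hm0⟩ := pow_unbounded_of_one_lt (16 * (K : ℝ)) hpM
  have hm3 : 3 ≤ p ^ m0 * ((M : ℝ) ^ m0 / (4 * K) - 1) := by
    have e : p ^ m0 * ((M : ℝ) ^ m0 / (4 * K) - 1) = (p * M) ^ m0 / (4 * K) - p ^ m0 := by
      rw [mul_pow]; ring
    rw [e]
    have h1 : p ^ m0 ≤ 1 := pow_le_one₀ hp.le hp1.le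
    have h2 : 4 ≤ (p * M) ^ m0 / (4 * K) := by
      rw [le_div_iff₀ (by positivity)]; linarith
    linarith
  set Bd : ℝ := max 1 (Fintype.card (FW M m0) : ℝ) with hBd
  have hBd1 : 1 ≤ Bd := le_max_left _ _
  set γ : ℝ := 1 / (4 * Bd ^ 2) with hγ
  have hγ0 : 0 < γ := by positivity
  choose Λ hΛ using fun n => exists_net hM hK n
  set c : ℝ := (49 * K * (K + 1)) ^ 2 with hc
  have hc1 : 1 ≤ c := by
    rw [hc]; apply one_le_pow₀; nlinarith
  -- choice of the initial level
  have hlim : Filter.Tendsto (fun n : ℕ => (M : ℝ) ^ n) Filter.atTop Filter.atTop :=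
    tendsto_pow_atTop_atTop_of_one_lt hM1
  have hb0 : 0 < γ / (4 * K) := by positivity
  have hlim2 : Filter.Tendsto (fun n : ℕ => (c * (M : ℝ) ^ (2 * m0) * Real.exp γ / (γ / (4 * K)) ^ 2) *
      ((γ / (4 * K) * (M : ℝ) ^ n) ^ 2 * Real.exp (-(γ / (4 * K) * (M : ℝ) ^ n))))
      Filter.atTop (nhds 0) := by
    have := (Real.tendsto_pow_mul_exp_neg_atTop_nhds_zero 2).comp (hlim.const_mul_atTop hb0)
    simpa using this.const_mul (c * (M : ℝ) ^ (2 * m0) * Real.exp γ / (γ / (4 * K)) ^ 2)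
  have hev := (hlim2.eventually (gt_mem_nhds (show (0 : ℝ) < 1 / 4 by norm_num))).and
    ((hlim.eventually_ge_atTop (8 * K)).and (Filter.eventually_ge_atTop 1))
  obtain ⟨n0, hn1, hn2, hn3⟩ := hev.exists
  set N0 : ℝ := (M : ℝ) ^ n0 / (4 * K) - 1 with hN0
  have hN01 : 1 ≤ N0 := by
    have : 2 ≤ (M : ℝ) ^ n0 / (4 * K) := by
      rw [le_div_iff₀ (by positivity)]; linarith
    linarith
  set z : ℝ := (M : ℝ) ^ (2 * m0) * Real.exp (-γ * N0) with hz
  have hz0 : 0 < z := by positivity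
  set d : ℝ := c * (M : ℝ) ^ (2 * n0) with hd
  have hd1 : 1 ≤ d := by
    have : (1 : ℝ) ≤ (M : ℝ) ^ (2 * n0) := one_le_pow₀ hM1.le
    rw [hd]; nlinarith
  have hdz : d * z ≤ 1 / 4 := by
    refine le_trans (le_of_eq ?_) hn1.le
    have : Real.exp (-γ * N0) = Real.exp γ * Real.exp (-(γ / (4 * K) * (M : ℝ) ^ n0)) := by
      rw [← Real.exp_add]; congr 1; rw [hN0]; ring
    rw [hd, hz, this]
    field_simp
    ring
  have hz4 : z ≤ 1 / 2 := by nlinarith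
  have hcard : ∀ j : ℕ, ((Λ (n0 + j * m0)).card : ℝ) ≤ d * ((M : ℝ) ^ (2 * m0)) ^ j := by
    intro j
    refine (hΛ (n0 + j * m0)).2.1.trans (le_of_eq ?_)
    rw [hd, hc]; ring
  let x : ℕ → ℝ := fun j => P.real (Uev M (n0 + j * m0) (Λ (n0 + j * m0)) (2 ^ j * N0))
  have hx0 : 0 < x 0 := by
    have := Uev_start hM hK hp hP n0 (Λ n0) (hΛ n0)
    simpa [x] using this
  have hstep : ∀ j, (1 - (1 / 2) ^ (j + 2)) * x j ≤ x (j + 1) := by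
    intro j
    have h1 := step_U hM hK hp.le hP m0 hm3 Bd hBd1 (le_max_right _ _) (n0 + j * m0)
      (Λ (n0 + j * m0)) (Λ (n0 + j * m0 + m0)) (hΛ _) (hΛ _) (2 ^ j * N0)
    have e : n0 + j * m0 + m0 = n0 + (j + 1) * m0 := by ring
    rw [e] at h1
    have e2 : 2 * (2 ^ j * N0) = 2 ^ (j + 1) * N0 := by ring
    rw [e2] at h1
    refine le_trans ?_ h1
    refine mul_le_mul_of_nonneg_right ?_ measureReal_nonneg
    have h2 : Real.exp (-γ * (2 ^ j * N0)) ≤ Real.exp (-γ * N0) ^ (j + 1) := by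
      rw [← Real.exp_nat_mul]
      apply Real.exp_le_exp.2
      have h3 : ((j + 1 : ℕ) : ℝ) ≤ 2 ^ j := by exact_mod_cast Nat.lt_two_pow_self (n := j)
      have h4 : 0 ≤ γ * N0 := by positivity
      nlinarith
    have h5 : ((Λ (n0 + (j + 1) * m0)).card : ℝ) * Real.exp (-γ * (2 ^ j * N0)) ≤ (1 / 2) ^ (j + 2) := by
      calc ((Λ (n0 + (j + 1) * m0)).card : ℝ) * Real.exp (-γ * (2 ^ j * N0))
          ≤ (d * ((M : ℝ) ^ (2 * m0)) ^ (j + 1)) * Real.exp (-γ * N0) ^ (j + 1) := by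
            gcongr; exact hcard _
        _ = (d * z) * z ^ j := by rw [hz]; ring
        _ ≤ (1 / 4) * (1 / 2) ^ j := by gcongr
        _ = (1 / 2) ^ (j + 2) := by ring
    linarith
  have hxj : ∀ j, x 0 * (1 / 2 + (1 / 2) ^ (j + 1)) ≤ x j := by
    intro j
    induction j with
    | zero => norm_num
    | succ j ih =>
      refine le_trans ?_ (hstep j)
      have h1 : (0 : ℝ) < (1 / 2) ^ j := by positivity
      have h2 : ((1 : ℝ) / 2) ^ j ≤ 1 := pow_le_one₀ (by norm_num) (by norm_num)
      have h3 : (0 : ℝ) ≤ 1 - (1 / 2) ^ (j + 2) := by rw [pow_add]; linarith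
      refine le_trans ?_ (mul_le_mul_of_nonneg_left ih h3)
      have : (1 / 2 + (1 / 2) ^ (j + 1 + 1)) ≤ (1 - ((1 : ℝ) / 2) ^ (j + 2)) * (1 / 2 + (1 / 2) ^ (j + 1)) := by
        simp only [pow_add]
        nlinarith
      calc x 0 * (1 / 2 + (1 / 2) ^ (j + 1 + 1))
          ≤ x 0 * ((1 - ((1 : ℝ) / 2) ^ (j + 2)) * (1 / 2 + (1 / 2) ^ (j + 1))) :=
            mul_le_mul_of_nonneg_left this hx0.le
        _ = _ := by ring
  set q : ℝ := x 0 / 4 with hq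
  have hq0 : 0 < q := by positivity
  -- choice of the final level
  set e : ℕ := M ^ (2 * m0) with he
  have hqN : 0 < q * N0 := by positivity
  have hlim3 : Filter.Tendsto (fun j : ℕ => (d / (q * N0) ^ e) *
      ((q * N0 * (2 : ℝ) ^ j) ^ e * Real.exp (-(q * N0 * (2 : ℝ) ^ j)))) Filter.atTop (nhds 0) := by
    have := (Real.tendsto_pow_mul_exp_neg_atTop_nhds_zero e).comp
      ((tendsto_pow_atTop_atTop_of_one_lt (show (1 : ℝ) < 2 by norm_num)).const_mul_atTop hqN)
    simpa using this.const_mul (d / (q * N0) ^ e)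
  obtain ⟨j, hj⟩ := (hlim3.eventually (gt_mem_nhds (show (0 : ℝ) < 1 / 2 by norm_num))).exists
  refine ⟨n0 + j * m0, Λ (n0 + j * m0), 2 ^ j * N0, q, by omega, hq0, hΛ _, ?_, ?_⟩
  · refine le_trans ?_ (hxj j)
    have : (0 : ℝ) < (1 / 2) ^ (j + 1) := by positivity
    rw [hq]; nlinarith
  · refine le_trans ?_ hj.le
    have h1 : ((M : ℝ) ^ (2 * m0)) ^ j ≤ ((2 : ℝ) ^ j) ^ e := by
      rw [← pow_mul (2 : ℝ), mul_comm j e, pow_mul (2 : ℝ)]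
      gcongr
      have : M ^ (2 * m0) < 2 ^ (M ^ (2 * m0)) := Nat.lt_two_pow_self
      exact_mod_cast this.le
    calc ((Λ (n0 + j * m0)).card : ℝ) * Real.exp (-q * (2 ^ j * N0))
        ≤ (d * ((2 : ℝ) ^ j) ^ e) * Real.exp (-q * (2 ^ j * N0)) := by
          gcongr
          refine (hcard j).trans ?_
          gcongr
      _ = _ := by
          have e3 : -q * (2 ^ j * N0) = -(q * N0 * (2 : ℝ) ^ j) := by ring
          rw [e3, mul_pow (q * N0)]
          field_simp

/-- `k` times iterated goodness of a cube. -/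
def Gk (M m : ℕ) (Λ : Finset (ℝ × ℝ)) : ℕ → Set (PercSpace 2 M)
  | 0 => univ
  | k + 1 => {ω | ∀ y ∈ Λ, ∃ v ∈ Cin M m y.1 y.2, Retained 2 M ω v.1 ∧ sh v.1 ω ∈ Gk M m Λ k}

/-- Goodness of a cube. -/
def Ginf (M m : ℕ) (Λ : Finset (ℝ × ℝ)) : Set (PercSpace 2 M) := ⋂ k, Gk M m Λ k

lemma Gk_succ_subset (M m : ℕ) (Λ : Finset (ℝ × ℝ)) (k : ℕ) : Gk M m Λ (k + 1) ⊆ Gk M m Λ k := by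
  induction k with
  | zero => exact subset_univ _
  | succ k ih =>
    intro ω hω y hy
    obtain ⟨v, hv, h1, h2⟩ := hω y hy
    exact ⟨v, hv, h1, ih h2⟩

lemma Gk_antitone (M m : ℕ) (Λ : Finset (ℝ × ℝ)) : Antitone (Gk M m Λ) :=
  antitone_nat_of_succ_le (Gk_succ_subset M m Λ)

lemma measurableSet_Gk (M m : ℕ) (Λ : Finset (ℝ × ℝ)) (k : ℕ) : MeasurableSet (Gk M m Λ k) := by
  induction k with
  | zero => exact MeasurableSet.univ
  | succ k ih =>
    have : Gk M m Λ (k + 1) = ⋂ y ∈ Λ, ⋃ v ∈ Cin M m y.1 y.2,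
        ({ω | Retained 2 M ω v.1} ∩ sh v.1 ⁻¹' Gk M m Λ k) := by
      ext ω
      simp only [Gk, mem_iInter, mem_iUnion, mem_inter_iff, mem_preimage, mem_setOf_eq, exists_prop]
    rw [this]
    exact Finset.measurableSet_biInter _ fun y _ => Finset.measurableSet_biUnion _ fun v _ =>
      (measurableSet_retained _).inter (measurable_sh _ ih)

lemma measurableSet_Ginf (M m : ℕ) (Λ : Finset (ℝ × ℝ)) : MeasurableSet (Ginf M m Λ) :=
  MeasurableSet.iInter fun k => measurableSet_Gk M m Λ k

lemma prob_Gk {M : ℕ} {p : ℝ} {P : Measure (PercSpace 2 M)}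
    (hP : IsBernoulliPerc 2 M p P) (m : ℕ) (Λ : Finset (ℝ × ℝ)) (N q : ℝ) (hq : 0 < q)
    (hU : 2 * q ≤ P.real (Uev M m Λ N)) (hN : Λ.card * Real.exp (-q * N) ≤ 1 / 2) (k : ℕ) :
    q ≤ P.real (Gk M m Λ k) := by
  classical
  have := hP.1
  have hU1 : P.real (Uev M m Λ N) ≤ 1 := measureReal_le_one
  induction k with
  | zero => simp [Gk]; linarith
  | succ k ih =>
    let g : FW M m → PercSpace 2 M → ℝ≥0∞ := fun _ => (Gk M m Λ k)ᶜ.indicator 1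
    have hgm : ∀ v, Measurable (g v) := fun v =>
      measurable_one.indicator (measurableSet_Gk M m Λ k).compl
    have h := union_step (P := P) (Uev M m Λ N) (Gk M m Λ (k + 1)) Λ
      (fun y => {ω | 1 ≤ ∏ v ∈ Cin M m y.1 y.2,
        (if Retained 2 M ω v.1 then g v (sh v.1 ω) else 1)}) _ (Real.exp_nonneg (-q * N)) ?_ ?_
    · nlinarith
    · intro ω hω
      by_cases hb : ω ∈ Gk M m Λ (k + 1)
      · exact Or.inl hb
      · right
        simp only [Gk, mem_setOf_eq] at hb
        push Not at hb
        obtain ⟨y, hy, hb⟩ := hb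
        simp only [mem_iUnion]
        refine ⟨y, hy, hω, ?_⟩
        simp only [mem_setOf_eq]
        rw [Finset.prod_eq_one]
        intro v hv
        by_cases hr : Retained 2 M ω v.1
        · have := hb v hv hr
          simp [g, hr, this]
        · simp [hr]
    · intro y hy
      refine key_step hP m _ (measurableSet_Uev M m Λ N) (glue_mem_Uev Λ N) _ g hgm q N hq.le ?_ ?_
      · intro v _
        rw [lintegral_indicator_one (measurableSet_Gk M m Λ k).compl]
        have h1 : P.real (Gk M m Λ k)ᶜ ≤ Real.exp (-q) := by
          rw [probReal_compl_eq_one_sub (measurableSet_Gk M m Λ k)]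
          have := Real.add_one_le_exp (-q)
          linarith
        rw [← ofReal_measureReal]
        exact ENNReal.ofReal_le_ofReal h1
      · intro ω hω
        exact hω y hy

lemma prob_Ginf {M : ℕ} {p : ℝ} {P : Measure (PercSpace 2 M)}
    (hP : IsBernoulliPerc 2 M p P) (m : ℕ) (Λ : Finset (ℝ × ℝ)) (N q : ℝ) (hq : 0 < q)
    (hU : 2 * q ≤ P.real (Uev M m Λ N)) (hN : Λ.card * Real.exp (-q * N) ≤ 1 / 2) :
    0 < P (Ginf M m Λ) := by
  have := hP.1
  have h1 := tendsto_measure_iInter_atTop (μ := P) (s := Gk M m Λ)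
    (fun k => (measurableSet_Gk M m Λ k).nullMeasurableSet) (Gk_antitone M m Λ) ⟨0, by finiteness⟩
  have h2 : ENNReal.ofReal q ≤ P (Ginf M m Λ) := by
    refine ge_of_tendsto' h1 fun k => ?_
    change ENNReal.ofReal q ≤ P (Gk M m Λ k)
    rw [← ofReal_measureReal]
    exact ENNReal.ofReal_le_ofReal (prob_Gk hP m Λ N q hq hU hN k)
  exact lt_of_lt_of_le (by simpa using hq) h2

/-- There are retained cubes of arbitrarily high level whose labeling lies in `G`. -/
def Iev {M : ℕ} (G : Set (PercSpace 2 M)) : Set (PercSpace 2 M) :=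
  {ω | ∀ n : ℕ, ∃ w : List (Alpha 2 M), n ≤ w.length ∧ Retained 2 M ω w ∧ sh w ω ∈ G}

lemma measurableSet_Iev {M : ℕ} (G : Set (PercSpace 2 M)) (hG : MeasurableSet G) :
    MeasurableSet (Iev G) := by
  have : Iev G = ⋂ n : ℕ, ⋃ w : List (Alpha 2 M), ⋃ (_ : n ≤ w.length),
      ({ω | Retained 2 M ω w} ∩ sh w ⁻¹' G) := by
    ext ω
    simp only [Iev, mem_iInter, mem_iUnion, mem_inter_iff, mem_preimage, mem_setOf_eq, exists_prop]
  rw [this]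
  exact MeasurableSet.iInter fun n => MeasurableSet.iUnion fun w => MeasurableSet.iUnion fun _ =>
    (measurableSet_retained _).inter (measurable_sh _ hG)

lemma mem_Iev_iff {M : ℕ} (G : Set (PercSpace 2 M)) (ω : PercSpace 2 M) :
    ω ∈ Iev G ↔ ∃ c : FW M 1, Retained 2 M ω c.1 ∧ sh c.1 ω ∈ Iev G := by
  classical
  constructor
  · intro h
    by_contra hcon
    have h1 : ∀ c : FW M 1, ∃ n : ℕ, Retained 2 M ω c.1 → ∀ w : List (Alpha 2 M), n ≤ w.length →
        Retained 2 M (sh c.1 ω) w → sh w (sh c.1 ω) ∉ G := by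
      intro c
      by_contra h2
      push Not at h2
      refine hcon ⟨c, (h2 0).1, fun n => ?_⟩
      obtain ⟨_, w, hw, hr, hg⟩ := h2 n
      exact ⟨w, hw, hr, hg⟩
    choose n hn using h1
    obtain ⟨w, hw, hr, hg⟩ := h (Finset.univ.sup n + 1)
    match w, hw, hr, hg with
    | [], hw, _, _ => simp at hw
    | c :: u, hw, hr, hg =>
      have e : c :: u = [c] ++ u := rfl
      rw [e, retained_append] at hr
      rw [e, sh_append] at hg
      have h3 : n ⟨[c], rfl⟩ ≤ Finset.univ.sup n := Finset.le_sup (Finset.mem_univ _)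
      simp only [List.length_cons] at hw
      exact hn ⟨[c], rfl⟩ hr.1 u (by omega) hr.2 hg
  · rintro ⟨c, hr, hI⟩ n
    obtain ⟨w, hw, hr2, hg⟩ := hI n
    refine ⟨c.1 ++ w, by simp; omega, (retained_append _ _ _).2 ⟨hr, hr2⟩, ?_⟩
    rw [sh_append]; exact hg

open Classical in
lemma Iev_fix {M : ℕ} {p : ℝ} {P : Measure (PercSpace 2 M)} (hP : IsBernoulliPerc 2 M p P)
    (G : Set (PercSpace 2 M)) (hG : MeasurableSet G) :
    P.real (Iev G)ᶜ = ∫ ω, (P.real (Iev G)ᶜ) ^ (cnt (Finset.univ : Finset (FW M 1)) ω) ∂P := by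
  have := hP.1
  have hm := (measurableSet_Iev G hG).compl
  have h := lint_branch hP 1 univ MeasurableSet.univ (by simp) Finset.univ
    (fun _ => (Iev G)ᶜ.indicator 1) (fun _ => measurable_one.indicator hm)
  simp only [Measure.restrict_univ, lintegral_indicator_one hm] at h
  have h1 : ∀ ω : PercSpace 2 M, (∏ v : FW M 1, (if Retained 2 M ω v.1 then
      ((Iev G)ᶜ.indicator 1 (sh v.1 ω) : ℝ≥0∞) else 1)) = (Iev G)ᶜ.indicator 1 ω := by
    intro ω
    by_cases hω : ω ∈ Iev G
    · obtain ⟨c, hc, hI⟩ := (mem_Iev_iff G ω).1 hω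
      rw [Finset.prod_eq_zero (Finset.mem_univ c)]
      · simp [hω]
      · simp [hc, hI]
    · rw [Finset.prod_eq_one]
      · simp [hω]
      · intro v _
        by_cases hr : Retained 2 M ω v.1
        · have : sh v.1 ω ∉ Iev G := fun hI => hω ((mem_Iev_iff G ω).2 ⟨v, hr, hI⟩)
          simp [hr, this]
        · simp [hr]
  have h2 : ∀ ω : PercSpace 2 M, (∏ v : FW M 1, (if Retained 2 M ω v.1 then P (Iev G)ᶜ else 1)) =
      ENNReal.ofReal ((P.real (Iev G)ᶜ) ^ (cnt (Finset.univ : Finset (FW M 1)) ω)) := by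
    intro ω
    rw [Finset.prod_ite, Finset.prod_const, Finset.prod_const_one, mul_one,
      ENNReal.ofReal_pow measureReal_nonneg, ofReal_measureReal]
    rfl
  simp only [h1, h2] at h
  rw [lintegral_indicator_one hm] at h
  rw [integral_eq_lintegral_of_nonneg_ae (Filter.Eventually.of_forall fun ω => by positivity)]
  · rw [← h]; rfl
  · have hmeas : Measurable fun ω : PercSpace 2 M => cnt (Finset.univ : Finset (FW M 1)) ω := by
      have := measurable_cnt (Finset.univ : Finset (FW M 1))
      have h3 := Nat.measurable_floor.comp this
      simpa [Function.comp_def] using h3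
    exact (measurable_const.pow hmeas).aestronglyMeasurable

lemma measurable_cnt_nat {M n : ℕ} (C : Finset (FW M n)) :
    Measurable fun ω : PercSpace 2 M => cnt C ω := by
  have h3 := Nat.measurable_floor.comp (measurable_cnt C)
  simpa [Function.comp_def] using h3

lemma prob_all_pos {M : ℕ} {p : ℝ} (hp : 0 < p) {P : Measure (PercSpace 2 M)}
    (hP : IsBernoulliPerc 2 M p P) :
    0 < P {ω | cnt (Finset.univ : Finset (FW M 1)) ω = Fintype.card (FW M 1)} := by
  classical
  have hfin : {w : Word 2 M | w.1.length ≤ 1}.Finite :=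
    Set.Finite.preimage (Subtype.val_injective.injOn) (List.finite_length_le _ 1)
  refine lt_of_lt_of_le ?_ (measure_mono
    (s := {ω : PercSpace 2 M | ∀ w ∈ hfin.toFinset, ω w = (fun _ => true) w}) ?_)
  · rw [hP.2]
    simp only [if_true, Finset.prod_const]
    exact ENNReal.pow_pos (by simpa using hp) _
  · intro ω hω
    change (Finset.filter _ _).card = Finset.univ.card
    congr 1
    apply Finset.filter_true_of_mem
    intro v _ u hu hp
    exact hω ⟨u, hu⟩ (by simpa using hp.length_le.trans v.2.le)

lemma fix_unique {Ω : Type*} [MeasurableSpace Ω] {P : Measure Ω} [IsProbabilityMeasure P]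
    (Z : Ω → ℕ) (hZ : Measurable Z) (n : ℕ) (hn : 2 ≤ n) (hpos : 0 < P {ω | Z ω = n}) (e h : ℝ)
    (he0 : 0 ≤ e) (heh : e ≤ h) (h1 : h < 1) (hfe : e = ∫ ω, e ^ Z ω ∂P)
    (hfh : h = ∫ ω, h ^ Z ω ∂P) : e = h := by
  by_contra hne
  have hlt : e < h := lt_of_le_of_ne heh hne
  set l : ℝ := (h - e) / (1 - e) with hl
  have h1e : 0 < 1 - e := by linarith
  have hl0 : 0 < l := div_pos (by linarith) h1e
  have hl1 : l < 1 := by rw [hl, div_lt_one h1e]; linarith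
  have hcomb : (1 - l) • e + l • (1 : ℝ) = h := by
    simp only [smul_eq_mul]
    have : l * (1 - e) = h - e := by rw [hl]; field_simp
    linarith
  have hIntg : ∀ x : ℝ, 0 ≤ x → x ≤ 1 → Integrable (fun ω => x ^ Z ω) P := by
    intro x hx0 hx1
    refine Integrable.of_bound (measurable_const.pow hZ).aestronglyMeasurable 1
      (Filter.Eventually.of_forall fun ω => ?_)
    rw [Real.norm_of_nonneg (by positivity)]
    exact pow_le_one₀ hx0 hx1
  have hie := hIntg e he0 (by linarith)
  have hih := hIntg h (by linarith) h1.le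
  have hnn : ∀ ω, 0 ≤ (1 - l) * e ^ Z ω + l - h ^ Z ω := by
    intro ω
    have := (convexOn_pow (𝕜 := ℝ) (Z ω)).2 (show e ∈ Ici 0 from he0)
      (show (1 : ℝ) ∈ Ici 0 from mem_Ici.2 zero_le_one) (by linarith : 0 ≤ 1 - l) hl0.le (by ring)
    rw [hcomb] at this
    simp only [smul_eq_mul, one_pow, mul_one] at this
    linarith
  have hsi : ∫ ω, ((1 - l) * e ^ Z ω + l - h ^ Z ω) ∂P = 0 := by
    have hi1 : Integrable (fun ω => (1 - l) * e ^ Z ω + l) P :=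
      (hie.const_mul _).add (integrable_const _)
    rw [integral_sub hi1 hih,
      integral_add (hie.const_mul _) (integrable_const _), integral_const_mul, ← hfe, ← hfh]
    simp only [smul_eq_mul, mul_one] at hcomb
    simp
    linarith
  rw [integral_eq_zero_iff_of_nonneg hnn
    (((hie.const_mul _).add (integrable_const _)).sub hih)] at hsi
  have hz : P {ω | Z ω = n} = 0 := by
    refine measure_mono_null ?_ hsi
    intro ω hω h0
    have := (strictConvexOn_pow hn).2 (show e ∈ Ici 0 from he0)
      (show (1 : ℝ) ∈ Ici 0 from mem_Ici.2 zero_le_one) (by linarith) (by linarith : 0 < 1 - l) hl0 (by ring)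
    rw [hcomb] at this
    simp only [smul_eq_mul, one_pow, mul_one] at this
    have hω' : Z ω = n := hω
    have h0' : (1 - l) * e ^ Z ω + l - h ^ Z ω = 0 := h0
    rw [hω'] at h0'
    linarith
  exact hpos.ne' hz

lemma null_Iev {M : ℕ} (hM : 2 ≤ M) {p : ℝ} (hp : 0 < p) {P : Measure (PercSpace 2 M)}
    (hP : IsBernoulliPerc 2 M p P) (G : Set (PercSpace 2 M)) (hG : MeasurableSet G)
    (hpos : 0 < P (Iev G)) : P (Iev univ \ Iev G) = 0 := by
  have := hP.1
  have hsub : Iev G ⊆ Iev univ := fun ω hω n => by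
    obtain ⟨w, h1, h2, _⟩ := hω n
    exact ⟨w, h1, h2, mem_univ _⟩
  have hmG := measurableSet_Iev G hG
  have hmU := measurableSet_Iev (univ : Set (PercSpace 2 M)) MeasurableSet.univ
  have hcard : 2 ≤ Fintype.card (FW M 1) := by
    rw [Nat.succ_le_iff, Fintype.one_lt_card_iff]
    refine ⟨⟨[fun _ => ⟨0, by omega⟩], rfl⟩, ⟨[fun _ => ⟨1, by omega⟩], rfl⟩, ?_⟩
    intro h
    have h2 := congrArg (fun v : FW M 1 => v.1.head?) h
    simp at h2
    have := congrFun h2 0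
    simp at this
  have hGr : 0 < P.real (Iev G) := by
    rw [Measure.real]; exact ENNReal.toReal_pos hpos.ne' (by finiteness)
  have heq := fix_unique (P := P) _ (measurable_cnt_nat (Finset.univ : Finset (FW M 1))) _ hcard
    (prob_all_pos hp hP) (P.real (Iev univ)ᶜ) (P.real (Iev G)ᶜ) measureReal_nonneg
    (measureReal_mono (compl_subset_compl.2 hsub))
    (by rw [probReal_compl_eq_one_sub hmG]; linarith)
    (Iev_fix hP univ MeasurableSet.univ) (Iev_fix hP G hG)
  rw [probReal_compl_eq_one_sub hmG, probReal_compl_eq_one_sub hmU] at heq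
  have h3 : P.real (Iev univ \ Iev G) = 0 := by
    rw [measureReal_diff hsub hmG]; linarith
  exact (measureReal_eq_zero_iff (by finiteness)).1 h3

lemma Ginf_step {M m : ℕ} {Λ : Finset (ℝ × ℝ)} (hΛ : Λ.Nonempty) {ω : PercSpace 2 M}
    (hω : ω ∈ Ginf M m Λ) : ∃ v : FW M m, Retained 2 M ω v.1 ∧ sh v.1 ω ∈ Ginf M m Λ := by
  by_contra hcon
  push Not at hcon
  have h1 : ∀ v : FW M m, ∃ k, Retained 2 M ω v.1 → sh v.1 ω ∉ Gk M m Λ k := by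
    intro v
    by_cases hr : Retained 2 M ω v.1
    · have := hcon v hr
      simp only [Ginf, mem_iInter, not_forall] at this
      obtain ⟨k, hk⟩ := this
      exact ⟨k, fun _ => hk⟩
    · exact ⟨0, fun h => absurd h hr⟩
  choose k hk using h1
  obtain ⟨y, hy⟩ := hΛ
  have h2 : ω ∈ Gk M m Λ (Finset.univ.sup k + 1) := mem_iInter.1 hω _
  obtain ⟨v, _, hr, hg⟩ := h2 y hy
  exact hk v hr (Gk_antitone M m Λ (Finset.le_sup (Finset.mem_univ v)) hg)

lemma Ginf_subset_Iev {M m : ℕ} (hm : 1 ≤ m) {Λ : Finset (ℝ × ℝ)} (hΛ : Λ.Nonempty) :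
    Ginf M m Λ ⊆ Iev (Ginf M m Λ) := by
  intro ω hω n
  induction n with
  | zero => exact ⟨[], le_rfl, retained_nil ω, by rw [sh_nil]; exact hω⟩
  | succ n ih =>
    obtain ⟨w, hw, hr, hg⟩ := ih
    obtain ⟨v, hv, hg2⟩ := Ginf_step hΛ hg
    refine ⟨w ++ v.1, ?_, (retained_append _ _ _).2 ⟨hr, hv⟩, by rw [sh_append]; exact hg2⟩
    rw [List.length_append, v.2]; omega

lemma exists_good {M : ℕ} (hM : 2 ≤ M) {K : ℕ} (hK : 1 ≤ K) {p : ℝ} (hp0 : ((M : ℝ))⁻¹ < p)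
    (hp1 : p < 1) {P : Measure (PercSpace 2 M)} (hP : IsBernoulliPerc 2 M p P) :
    ∃ (m : ℕ) (Λ : Finset (ℝ × ℝ)), 1 ≤ m ∧ IsNet M K m Λ ∧
      P (Iev univ \ Iev (Ginf M m Λ)) = 0 := by
  obtain ⟨m, Λ, N, q, hm, hq, hΛ, hU, hN⟩ := exists_params hM hK hp0 hp1 hP
  have hp : 0 < p := lt_trans (by positivity) hp0
  have hne : Λ.Nonempty := by
    have hK0 : (1 : ℝ) ≤ K := by exact_mod_cast hK
    have : ((1, 1 / 2) : ℝ × ℝ) ∈ Tset K := by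
      refine ⟨?_, hK0, by norm_num, by norm_num⟩
      rw [div_le_one (by positivity)]; exact hK0
    obtain ⟨y, hy, _⟩ := hΛ.2.2 _ this
    exact ⟨y, hy⟩
  refine ⟨m, Λ, hm, hΛ, null_Iev hM hp hP _ (measurableSet_Ginf M m Λ) ?_⟩
  exact lt_of_lt_of_le (prob_Ginf hP m Λ N q hq hU hN) (measure_mono (Ginf_subset_Iev hm hne))

/-- The unit square. -/
def unitSq : Set (EuclideanSpace ℝ (Fin 2)) := {x | ∀ i, 0 ≤ x i ∧ x i ≤ 1}

/-- The lower left corner of a cube. -/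
def corner {M : ℕ} (w : List (Alpha 2 M)) : EuclideanSpace ℝ (Fin 2) :=
  WithLp.toLp 2 (wordBase 2 M w)

lemma corner_apply {M : ℕ} (w : List (Alpha 2 M)) (i : Fin 2) : corner w i = wordBase 2 M w i := rfl

lemma continuous_coord (i : Fin 2) : Continuous fun x : EuclideanSpace ℝ (Fin 2) => x i := by
  fun_prop

lemma isClosed_wordCube {M : ℕ} (w : List (Alpha 2 M)) : IsClosed (wordCube 2 M w) := by
  have : wordCube 2 M w = ⋂ i : Fin 2, {x | wordBase 2 M w i ≤ x i ∧
      x i ≤ wordBase 2 M w i + (M : ℝ) ^ (-(w.length : ℤ))} := by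
    ext x; simp [wordCube]
  rw [this]
  exact isClosed_iInter fun i => (isClosed_le continuous_const (continuous_coord i)).inter
    (isClosed_le (continuous_coord i) continuous_const)

lemma isCompact_unitSq : IsCompact unitSq := by
  have h1 : IsCompact (Set.pi univ fun _ : Fin 2 => Icc (0 : ℝ) 1) :=
    isCompact_univ_pi fun _ => isCompact_Icc
  have h2 := (EuclideanSpace.equiv (Fin 2) ℝ).symm.toHomeomorph.isCompact_image.2 h1
  convert h2 using 1
  ext x
  constructor
  · intro hx
    exact ⟨fun i => x i, fun i _ => hx i, rfl⟩
  · rintro ⟨y, hy, rfl⟩ i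
    exact hy i (mem_univ i)

lemma convex_wordCube {M : ℕ} (w : List (Alpha 2 M)) : Convex ℝ (wordCube 2 M w) := by
  intro x hx y hy a b ha hb hab i
  have h1 := hx i
  have h2 := hy i
  have e : (a • x + b • y) i = a * x i + b * y i := by simp
  rw [e]
  have hb' : b = 1 - a := by linarith
  subst hb'
  constructor <;> nlinarith

lemma wordCube_append_subset {M : ℕ} (hM : 2 ≤ M) (w u : List (Alpha 2 M)) :
    wordCube 2 M (w ++ u) ⊆ wordCube 2 M w := by
  intro x hx i
  have h := hx i
  have h1 := wordBase_append hM w u i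
  have h2 := wordBase_nonneg u i
  have h3 := wordBase_add_le hM u i
  have hM0 : (0 : ℝ) < M := by positivity
  rw [List.length_append, zpow_neg, zpow_natCast, pow_add, mul_inv] at h
  rw [zpow_neg, zpow_natCast]
  have h4 : (0 : ℝ) < ((M : ℝ) ^ w.length)⁻¹ := by positivity
  rw [h1] at h
  constructor <;> nlinarith

lemma corner_mem {M : ℕ} (w : List (Alpha 2 M)) : corner w ∈ wordCube 2 M w := by
  intro i
  rw [corner_apply]
  have : (0 : ℝ) ≤ (M : ℝ) ^ (-(w.length : ℤ)) := by positivity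
  constructor <;> linarith

lemma wordCube_subset_unitSq {M : ℕ} (hM : 2 ≤ M) (w : List (Alpha 2 M)) :
    wordCube 2 M w ⊆ unitSq := by
  intro x hx i
  have h := hx i
  rw [zpow_neg, zpow_natCast] at h
  have h2 := wordBase_nonneg w i
  have h3 := wordBase_add_le hM w i
  constructor <;> linarith

lemma corner_mem_approx {M : ℕ} (hM : 2 ≤ M) {ω : PercSpace 2 M} {w : List (Alpha 2 M)}
    (hr : Retained 2 M ω w) {n : ℕ} (hn : n ≤ w.length) : corner w ∈ approx 2 M ω n := by
  have e : w.take n ++ w.drop n = w := List.take_append_drop n w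
  have hr2 : Retained 2 M ω (w.take n) := by
    rw [← e, retained_append] at hr; exact hr.1
  have h1 : corner w ∈ wordCube 2 M (w.take n) := by
    have := corner_mem (M := M) w
    rw [← e] at this
    have h2 := wordCube_append_subset hM _ _ this
    rwa [e] at h2
  exact mem_iUnion₂.2 ⟨w.take n, ⟨by simp [hn], hr2⟩, h1⟩

lemma isClosed_approx {M : ℕ} (ω : PercSpace 2 M) (n : ℕ) : IsClosed (approx 2 M ω n) := by
  refine Set.Finite.isClosed_biUnion ?_ fun w _ => isClosed_wordCube w
  exact (List.finite_length_eq (Alpha 2 M) n).subset fun w hw => hw.1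

lemma limit_point {M : ℕ} (hM : 2 ≤ M) {ω : PercSpace 2 M} (w : ℕ → List (Alpha 2 M))
    (hw : ∀ k, k ≤ (w k).length) (hr : ∀ k, Retained 2 M ω (w k)) :
    ∃ z ∈ percLimit 2 M ω, ∃ φ : ℕ → ℕ, StrictMono φ ∧
      Filter.Tendsto (fun k => corner (w (φ k))) Filter.atTop (nhds z) := by
  obtain ⟨z, _, φ, hφ, hz⟩ := isCompact_unitSq.tendsto_subseq (x := fun k => corner (w k))
    fun k => wordCube_subset_unitSq hM _ (corner_mem (w k))
  refine ⟨z, ?_, φ, hφ, hz⟩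
  refine mem_iInter₂.2 fun n _ => ?_
  refine (isClosed_approx ω n).mem_of_tendsto hz ?_
  filter_upwards [Filter.eventually_ge_atTop n] with k hk
  exact corner_mem_approx hM (hr _) ((hk.trans (hφ.id_le k)).trans (hw _))

lemma percLimit_ne_iff {M : ℕ} (hM : 2 ≤ M) (ω : PercSpace 2 M) :
    percLimit 2 M ω ≠ ∅ ↔ ω ∈ Iev univ := by
  constructor
  · intro h n
    obtain ⟨x, hx⟩ := nonempty_iff_ne_empty.2 h
    have h1 := mem_iInter₂.1 hx (n + 1) (by simp)
    obtain ⟨w, ⟨hl, hr⟩, _⟩ := mem_iUnion₂.1 h1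
    exact ⟨w, by omega, hr, mem_univ _⟩
  · intro h
    choose w hw hr _ using h
    obtain ⟨z, hz, _⟩ := limit_point hM w hw hr
    exact nonempty_iff_ne_empty.1 ⟨z, hz⟩

lemma chain {M K m : ℕ} (hK : 1 ≤ K) {Λ : Finset (ℝ × ℝ)} (hΛ : IsNet M K m Λ)
    {ω : PercSpace 2 M} (w0 : List (Alpha 2 M)) (s : ℝ) (A : List (Alpha 2 M) → ℝ)
    (hA : ∀ (x : List (Alpha 2 M)) (v : FW M m),
      |A (w0 ++ x ++ v.1) - ap s (A (w0 ++ x)) v.1| ≤ 1 / (8 * K)) (k : ℕ) :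
    ∀ x : List (Alpha 2 M), Retained 2 M ω (w0 ++ x) → sh (w0 ++ x) ω ∈ Gk M m Λ k →
      (s, A (w0 ++ x)) ∈ Tset K →
      ∃ u : List (Alpha 2 M), u.length = x.length + k * m ∧ Retained 2 M ω (w0 ++ u) ∧
        (s, A (w0 ++ u)) ∈ Tset K := by
  have hK0 : (1 : ℝ) ≤ K := by exact_mod_cast hK
  induction k with
  | zero =>
    intro x hr _ hT
    exact ⟨x, by simp, hr, hT⟩
  | succ k ih =>
    intro x hr hg hT
    obtain ⟨y, hy, hv⟩ := hΛ.2.2 _ hT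
    obtain ⟨v, hvC, hvr, hvg⟩ := hg y hy
    have h1 := hv v hvC
    simp only at h1
    have h2 := abs_le.1 (hA x v)
    have h3 : 1 / (8 * (K : ℝ)) ≤ s / 8 := by
      have e : 1 / (8 * (K : ℝ)) = 1 / K / 8 := by field_simp
      have := hT.1
      simp only at this
      rw [e]; linarith
    rw [List.append_assoc] at h2
    have hT2 : (s, A (w0 ++ (x ++ v.1))) ∈ Tset K := by
      refine ⟨hT.1, hT.2.1, ?_, ?_⟩ <;> simp only <;> linarith
    obtain ⟨u, hu, hur, huT⟩ := ih (x ++ v.1)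
      (by rw [← List.append_assoc]; exact (retained_append _ _ _).2 ⟨hr, hvr⟩)
      (by rw [← List.append_assoc, sh_append]; exact hvg) hT2
    refine ⟨u, ?_, hur, huT⟩
    rw [hu, List.length_append, v.2]; ring

lemma norm_le_two_mul (x : EuclideanSpace ℝ (Fin 2)) (r : ℝ) (h : ∀ i, |x i| ≤ r) :
    ‖x‖ ≤ 2 * r := by
  have hr : 0 ≤ r := (abs_nonneg _).trans (h 0)
  rw [EuclideanSpace.norm_eq]
  refine Real.sqrt_le_iff.2 ⟨by positivity, ?_⟩
  simp only [Fin.sum_univ_two, Real.norm_eq_abs]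
  have h0 := h 0
  have h1 := h 1
  have a0 := abs_nonneg (x 0)
  have a1 := abs_nonneg (x 1)
  nlinarith

lemma map_eq (L : EuclideanSpace ℝ (Fin 2) →L[ℝ] ℝ) (x : EuclideanSpace ℝ (Fin 2)) :
    L x = x 0 * L (EuclideanSpace.single 0 1) + x 1 * L (EuclideanSpace.single 1 1) := by
  have : x = x 0 • EuclideanSpace.single 0 (1 : ℝ) + x 1 • EuclideanSpace.single 1 (1 : ℝ) := by
    ext i
    fin_cases i <;> simp
  conv_lhs => rw [this]
  simp only [map_add, map_smul, smul_eq_mul]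

/-- The renormalised position of the level set `f = t` with respect to the cube `w`. -/
def lev {M : ℕ} (f : EuclideanSpace ℝ (Fin 2) → ℝ) (β t : ℝ) (w : List (Alpha 2 M)) : ℝ :=
  (t - f (corner w)) * (M : ℝ) ^ w.length / β

lemma lev_err {M : ℕ} (hM : 2 ≤ M) (f : EuclideanSpace ℝ (Fin 2) → ℝ)
    (w0 : List (Alpha 2 M)) (L : EuclideanSpace ℝ (Fin 2) →L[ℝ] ℝ) (α β η : ℝ) (hβ : 0 < β)
    (hα' : L (EuclideanSpace.single 0 1) = α) (hβ' : L (EuclideanSpace.single 1 1) = β)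
    (hη : 0 ≤ η)
    (hd : ∀ x ∈ wordCube 2 M w0, DifferentiableAt ℝ f x)
    (hL : ∀ x ∈ wordCube 2 M w0, ‖fderiv ℝ f x - L‖ ≤ η) (t : ℝ) (m : ℕ)
    (x : List (Alpha 2 M)) (v : FW M m) :
    |lev f β t (w0 ++ x ++ v.1) - ap (α / β) (lev f β t (w0 ++ x)) v.1| ≤
      2 * η * (M : ℝ) ^ m / β := by
  have hM0 : (0 : ℝ) < M := by positivity
  set w := w0 ++ x with hw
  set D : ℝ := (M : ℝ) ^ w.length with hD
  have hD0 : 0 < D := by positivity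
  have hc1 : corner w ∈ wordCube 2 M w0 := wordCube_append_subset hM _ _ (corner_mem _)
  have hc2 : corner (w ++ v.1) ∈ wordCube 2 M w0 :=
    wordCube_append_subset hM _ x (wordCube_append_subset hM _ _ (corner_mem _))
  have h1 := (convex_wordCube w0).norm_image_sub_le_of_norm_fderiv_le' hd hL hc1 hc2
  have hco : ∀ i, (corner (w ++ v.1) - corner w) i = D⁻¹ * wordBase 2 M v.1 i := by
    intro i
    have : (corner (w ++ v.1) - corner w) i = corner (w ++ v.1) i - corner w i := rfl
    rw [this, corner_apply, corner_apply, wordBase_append hM]; ring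
  have hn : ‖corner (w ++ v.1) - corner w‖ ≤ 2 * D⁻¹ := by
    apply norm_le_two_mul
    intro i
    have h2 := wordBase_nonneg v.1 i
    have h3 := wordBase_le_one hM v.1 i
    have h4 : 0 < D⁻¹ := by positivity
    rw [hco, abs_of_nonneg (by positivity)]
    nlinarith
  rw [map_eq L, hco, hco, hα', hβ', Real.norm_eq_abs] at h1
  have h2 : |f (corner (w ++ v.1)) - f (corner w) -
      (D⁻¹ * wordBase 2 M v.1 0 * α + D⁻¹ * wordBase 2 M v.1 1 * β)| ≤ η * (2 * D⁻¹) :=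
    h1.trans (by gcongr)
  have e : lev f β t (w ++ v.1) - ap (α / β) (lev f β t w) v.1 =
      -(f (corner (w ++ v.1)) - f (corner w) -
      (D⁻¹ * wordBase 2 M v.1 0 * α + D⁻¹ * wordBase 2 M v.1 1 * β)) * (D * (M : ℝ) ^ m / β) := by
    unfold lev ap
    rw [List.length_append, pow_add, v.2, ← hD]
    field_simp
    ring
  rw [e, abs_mul, abs_neg, abs_of_pos (by positivity : 0 < D * (M : ℝ) ^ m / β)]
  calc _ ≤ η * (2 * D⁻¹) * (D * (M : ℝ) ^ m / β) := by gcongr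
    _ = _ := by field_simp

lemma percLimit_subset {M : ℕ} (hM : 2 ≤ M) (ω : PercSpace 2 M) : percLimit 2 M ω ⊆ unitSq := by
  intro x hx
  have h1 := mem_iInter₂.1 hx 1 (by simp)
  obtain ⟨w, _, hw⟩ := mem_iUnion₂.1 h1
  exact wordCube_subset_unitSq hM w hw

lemma deterministic {M : ℕ} (hM : 2 ≤ M) {ω : PercSpace 2 M}
    (hω : ∀ K : ℕ, 1 ≤ K → ∃ (m : ℕ) (Λ : Finset (ℝ × ℝ)), 1 ≤ m ∧ IsNet M K m Λ ∧
      ω ∈ Iev (Ginf M m Λ))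
    (U : Set (EuclideanSpace ℝ (Fin 2))) (f : EuclideanSpace ℝ (Fin 2) → ℝ)
    (hU : IsOpen U) (hsq : unitSq ⊆ U) (hf : ContDiffOn ℝ 1 f U)
    (hpos : ∀ x ∈ U, ∀ i : Fin 2, 0 < fderiv ℝ f x (EuclideanSpace.single i 1)) :
    ∃ a b : ℝ, a < b ∧ Set.Ioo a b ⊆ f '' percLimit 2 M ω := by
  have hM0 : (0 : ℝ) < M := by positivity
  have hM2 : (2 : ℝ) ≤ M := by exact_mod_cast hM
  have hfd : ContinuousOn (fderiv ℝ f) unitSq :=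
    (hf.continuousOn_fderiv_of_isOpen hU le_rfl).mono hsq
  have hdiff : ∀ x ∈ unitSq, DifferentiableAt ℝ f x := fun x hx =>
    (hf.differentiableOn one_ne_zero).differentiableAt (hU.mem_nhds (hsq hx))
  have hne : unitSq.Nonempty := ⟨corner (M := M) [], wordCube_subset_unitSq hM _ (corner_mem _)⟩
  have hg : ∀ i : Fin 2, ContinuousOn (fun x => fderiv ℝ f x (EuclideanSpace.single i 1)) unitSq :=
    fun i => hfd.clm_apply continuousOn_const
  have hmin : ∀ i : Fin 2, ∃ c : ℝ, 0 < c ∧ ∀ x ∈ unitSq,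
      c ≤ fderiv ℝ f x (EuclideanSpace.single i 1) := by
    intro i
    obtain ⟨x, hx, hmn⟩ := isCompact_unitSq.exists_isMinOn hne (hg i)
    exact ⟨_, hpos x (hsq hx) i, fun y hy => hmn hy⟩
  have hmax : ∀ i : Fin 2, ∃ c : ℝ, ∀ x ∈ unitSq,
      fderiv ℝ f x (EuclideanSpace.single i 1) ≤ c := by
    intro i
    obtain ⟨x, hx, hmn⟩ := isCompact_unitSq.exists_isMaxOn hne (hg i)
    exact ⟨_, fun y hy => hmn hy⟩
  choose c hc0 hc using hmin
  choose C hC using hmax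
  obtain ⟨K, hK⟩ := exists_nat_ge (max 1 (max (C 0 / c 1) (C 1 / c 0)))
  have hK1 : 1 ≤ K := by
    have := (le_max_left _ _).trans hK
    exact_mod_cast this
  have hK0 : (1 : ℝ) ≤ K := by exact_mod_cast hK1
  have hKa : C 0 / c 1 ≤ K := ((le_max_left _ _).trans (le_max_right _ _)).trans hK
  have hKb : C 1 / c 0 ≤ K := ((le_max_right _ _).trans (le_max_right _ _)).trans hK
  obtain ⟨m, Λ, hm, hΛ, hI⟩ := hω K hK1
  set η : ℝ := c 1 / (16 * K * (M : ℝ) ^ m) with hη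
  have hc1 := hc0 1
  have hη0 : 0 < η := by positivity
  have huc := isCompact_unitSq.uniformContinuousOn_of_continuous hfd
  obtain ⟨δ, hδ, huc⟩ := Metric.uniformContinuousOn_iff.1 huc η hη0
  obtain ⟨n1, hn1⟩ := exists_pow_lt_of_lt_one (show 0 < δ / 2 by positivity)
    (show (1 / 2 : ℝ) < 1 by norm_num)
  obtain ⟨w0, hw0, hr0, hg0⟩ := hI n1
  set z0 := corner w0 with hz0
  have hz0s : z0 ∈ unitSq := wordCube_subset_unitSq hM w0 (corner_mem w0)
  set α : ℝ := fderiv ℝ f z0 (EuclideanSpace.single 0 1) with hα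
  set β : ℝ := fderiv ℝ f z0 (EuclideanSpace.single 1 1) with hβ
  have hα0 : 0 < α := hpos _ (hsq hz0s) 0
  have hβ0 : 0 < β := hpos _ (hsq hz0s) 1
  set s : ℝ := α / β with hs
  have hs0 : 0 < s := by positivity
  have hs1 : s ≤ K := by
    refine le_trans ?_ hKa
    exact div_le_div₀ (hα0.le.trans (hC 0 _ hz0s)) (hC 0 _ hz0s) hc1 (hc 1 _ hz0s)
  have hs2 : 1 / (K : ℝ) ≤ s := by
    have h1 : β / α ≤ K := by
      refine le_trans ?_ hKb
      exact div_le_div₀ (hβ0.le.trans (hC 1 _ hz0s)) (hC 1 _ hz0s) (hc0 0) (hc 0 _ hz0s)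
    rw [div_le_iff₀ hα0] at h1
    rw [hs, div_le_div_iff₀ (by positivity) hβ0]
    linarith
  have hpw : ∀ n k : ℕ, k ≤ n → ((M : ℝ) ^ n)⁻¹ ≤ (1 / 2) ^ k := by
    intro n k hkn
    rw [one_div, inv_pow]
    apply inv_anti₀ (by positivity)
    calc (2 : ℝ) ^ k ≤ (M : ℝ) ^ k := by gcongr
      _ ≤ (M : ℝ) ^ n := pow_le_pow_right₀ (by linarith) hkn
  have hL : ∀ x ∈ wordCube 2 M w0, ‖fderiv ℝ f x - fderiv ℝ f z0‖ ≤ η := by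
    intro x hx
    have h1 : dist x z0 < δ := by
      rw [dist_eq_norm]
      refine lt_of_le_of_lt (norm_le_two_mul _ (((M : ℝ) ^ w0.length)⁻¹) fun i => ?_) ?_
      · have h2 := hx i
        rw [zpow_neg, zpow_natCast] at h2
        have e : (x - z0) i = x i - wordBase 2 M w0 i := rfl
        rw [e, abs_of_nonneg (by linarith)]
        linarith
      · have := hpw _ _ hw0
        linarith
    have := huc x (wordCube_subset_unitSq hM _ hx) z0 hz0s h1
    rw [dist_eq_norm] at this
    exact this.le
  have herr : 2 * η * (M : ℝ) ^ m / β ≤ 1 / (8 * K) := by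
    have h1 : c 1 ≤ β := hc 1 _ hz0s
    have e : 2 * η * (M : ℝ) ^ m / β = c 1 / β * (1 / (8 * K)) := by
      rw [hη]; field_simp; norm_num
    rw [e]
    have h2 : c 1 / β ≤ 1 := by rw [div_le_one hβ0]; exact h1
    have h3 : (0 : ℝ) < 1 / (8 * K) := by positivity
    nlinarith
  set D : ℝ := (M : ℝ) ^ w0.length with hD
  have hD0 : 0 < D := by positivity
  refine ⟨f z0 + β / D * (s / 4), f z0 + β / D * (1 + 3 * s / 4), ?_, ?_⟩
  · have : 0 < β / D := by positivity
    nlinarith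
  intro t ht
  have hbd : 0 < β / D := by positivity
  have hlev : lev f β t w0 = (t - f z0) / (β / D) := by
    unfold lev
    rw [← hz0, ← hD]; field_simp
  have hT0 : (s, lev f β t (w0 ++ [])) ∈ Tset K := by
    rw [List.append_nil]
    refine ⟨hs2, hs1, ?_, ?_⟩ <;> simp only <;> rw [hlev]
    · rw [le_div_iff₀ hbd]; linarith [ht.1]
    · rw [div_le_iff₀ hbd]; linarith [ht.2]
  have hch : ∀ k : ℕ, ∃ u : List (Alpha 2 M), u.length = k * m ∧ Retained 2 M ω (w0 ++ u) ∧
      (s, lev f β t (w0 ++ u)) ∈ Tset K := by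
    intro k
    have := chain hK1 hΛ (ω := ω) w0 s (lev f β t) (fun x v =>
      (lev_err hM f w0 (fderiv ℝ f z0) α β η hβ0 rfl rfl hη0.le
        (fun x hx => hdiff x (wordCube_subset_unitSq hM _ hx)) hL t m x v).trans herr) k []
      (by rw [List.append_nil]; exact hr0)
      (by rw [List.append_nil]; exact mem_iInter.1 hg0 k) hT0
    simpa using this
  choose u hu hur huT using hch
  have hlen : ∀ k, k ≤ (w0 ++ u k).length := by
    intro k
    rw [List.length_append, hu]
    have := Nat.le_mul_of_pos_right k hm
    omega
  obtain ⟨z, hz, φ, hφ, hlim⟩ := limit_point hM (fun k => w0 ++ u k) hlen hur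
  refine ⟨z, hz, ?_⟩
  have hlim1 : Filter.Tendsto (fun k => f (corner (w0 ++ u (φ k)))) Filter.atTop (nhds (f z)) :=
    ((hdiff z (percLimit_subset hM ω hz)).continuousAt.tendsto).comp hlim
  have hlim2 : Filter.Tendsto (fun k => f (corner (w0 ++ u k))) Filter.atTop (nhds t) := by
    rw [tendsto_iff_dist_tendsto_zero]
    have h0 : Filter.Tendsto (fun k : ℕ => β * (1 + 3 * s / 4) * (1 / 2 : ℝ) ^ k) Filter.atTop
        (nhds 0) := by
      have := (tendsto_pow_atTop_nhds_zero_of_lt_one (show (0 : ℝ) ≤ 1 / 2 by norm_num)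
        (by norm_num)).const_mul (β * (1 + 3 * s / 4))
      simpa using this
    refine squeeze_zero (fun _ => dist_nonneg) (fun k => ?_) h0
    have h1 := (huT k).2.2
    simp only at h1
    set n := (w0 ++ u k).length with hn
    have hMn : (0 : ℝ) < (M : ℝ) ^ n := by positivity
    have e : t - f (corner (w0 ++ u k)) = lev f β t (w0 ++ u k) * (β * ((M : ℝ) ^ n)⁻¹) := by
      unfold lev
      rw [← hn]; field_simp
    have hl0 : 0 ≤ lev f β t (w0 ++ u k) := by linarith [h1.1]
    rw [dist_comm, Real.dist_eq, e, abs_of_nonneg (by positivity)]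
    calc lev f β t (w0 ++ u k) * (β * ((M : ℝ) ^ n)⁻¹)
        ≤ (1 + 3 * s / 4) * (β * (1 / 2) ^ k) := by
          gcongr
          · exact h1.2
          · exact hpw _ _ (hlen k)
      _ = _ := by ring
  exact tendsto_nhds_unique hlim1 (hlim2.comp hφ.tendsto_atTop)

/-- if `M⁻¹ < p < 1` then, conditioned on `E ≠ ∅`, almost surely
every `C¹` function on a neighborhood of the unit square with strictly positive
partial derivatives maps `E` onto a set containing an interval. -/
theorem smooth_image_contains_interval
    (M : ℕ) (hM : 2 ≤ M) (p : ℝ) (hp0 : ((M : ℝ))⁻¹ < p) (hp1 : p < 1)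
    (P : Measure (PercSpace 2 M)) (hP : IsBernoulliPerc 2 M p P) :
    ∀ᵐ ω ∂(ProbabilityTheory.cond P {ω | percLimit 2 M ω ≠ ∅}),
      ∀ (U : Set (EuclideanSpace ℝ (Fin 2))) (f : EuclideanSpace ℝ (Fin 2) → ℝ),
        IsOpen U → {x : EuclideanSpace ℝ (Fin 2) | ∀ i, 0 ≤ x i ∧ x i ≤ 1} ⊆ U →
        ContDiffOn ℝ 1 f U →
        (∀ x ∈ U, ∀ i : Fin 2, 0 < fderiv ℝ f x (EuclideanSpace.single i 1)) →
        ∃ a b : ℝ, a < b ∧ Set.Ioo a b ⊆ f '' percLimit 2 M ω := by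
  have hset : {ω | percLimit 2 M ω ≠ ∅} = Iev univ := by
    ext ω; exact percLimit_ne_iff hM ω
  rw [hset]
  have hmU := measurableSet_Iev (univ : Set (PercSpace 2 M)) MeasurableSet.univ
  have hgood : ∀ K : ℕ, ∃ (m : ℕ) (Λ : Finset (ℝ × ℝ)), 1 ≤ K → 1 ≤ m ∧ IsNet M K m Λ ∧
      P (Iev univ \ Iev (Ginf M m Λ)) = 0 := by
    intro K
    by_cases hK : 1 ≤ K
    · obtain ⟨m, Λ, h⟩ := exists_good hM hK hp0 hp1 hP
      exact ⟨m, Λ, fun _ => h⟩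
    · exact ⟨0, ∅, fun h => absurd h hK⟩
  choose m Λ hg using hgood
  have hae : ∀ᵐ ω ∂P, ω ∈ Iev univ → ∀ K : ℕ, 1 ≤ K → ω ∈ Iev (Ginf M (m K) (Λ K)) := by
    have h1 : ∀ K : ℕ, ∀ᵐ ω ∂P, 1 ≤ K → ω ∈ Iev univ → ω ∈ Iev (Ginf M (m K) (Λ K)) := by
      intro K
      by_cases hK : 1 ≤ K
      · rw [ae_iff]
        refine measure_mono_null ?_ (hg K hK).2.2
        intro ω hω
        have hω' : ¬ (1 ≤ K → ω ∈ Iev univ → ω ∈ Iev (Ginf M (m K) (Λ K))) := hω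
        push Not at hω'
        exact ⟨hω'.2.1, hω'.2.2⟩
      · exact Filter.Eventually.of_forall fun ω h => absurd h hK
    filter_upwards [ae_all_iff.2 h1] with ω h hI K hK using h K hK hI
  refine Measure.ae_smul_measure ?_ _
  refine (ae_restrict_iff' hmU).2 ?_
  filter_upwards [hae] with ω h hI U f hU hsq hf hpos
  exact deterministic hM (fun K hK => ⟨m K, Λ K, (hg K hK).1, (hg K hK).2.1, h hI K hK⟩)
    U f hU hsq hf hpos
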